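/- arXiv:1510.05835 — 2 statements merged into one kernel-verified Lean document; each statement's English description precedes it below -/
import Mathlib

section
/- Let α, β, γ ∈ [0,1) be real numbers and k ≥ 1 an integer. Then the two-variable polynomial ∑_{i=0}^{k} (x)_{i−1} · (y+i+1)_{k−i−1} · B_i(β−α) · B_{k−i}(γ−β) is a nonzero element of ℝ[x,y], where (x)_{−1} := 1, (x)_{i−1} := x(x+1)⋯(x+i−1)/i! for i ≥ 1, (y+i+1)_{k−i−1} := (y+i+1)(y+i+2)⋯(y+k)/(k−i)! for i ≤ k−1, and (y+k+1)_{−1} := 1. -/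
/-!
The polynomials `x(x+1)⋯(x+i-1)/i!` are linearly independent, so if the sum vanished, every product
`B_i(a) B_{k-i}(b)` with `a = β - α`, `b = γ - β` would vanish (`prod_eq_zero_of_sum_eq_zero`).
Here `a, b ∈ (-1, 1)` and `a + b = γ - α ∈ (-1, 1)`. This is impossible:

* If `b ≥ 0` and `a ≠ 1/2`, then `B_0(a)` and `B_1(a)` are nonzero, so `B_k` and `B_{k-1}` both
  vanish at `b ∈ [0, 1)`. But consecutive Bernoulli polynomials have no common zero there
  (`not_common_zero`). The same holds with `a` and `b` exchanged, and `a = b = 1/2` is excluded by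
  `a + b < 1`. This settles the case where `a` or `b` is nonnegative.
* If `a, b < 0`, one of them, say `b`, lies in `(-1/2, 0)`. None of `B_0, …, B_3` vanishes at
  `a < 0`, so `B_k, …, B_{k-3}` (as far as they are defined) vanish at `b`. One of these indices is
  `≡ 3 mod 4` (or else `k ≤ 2`, which is immediate), and such a Bernoulli polynomial is negative on
  `(-1/2, 0)`.

Both analytic inputs rest on the sign of `B_{2m+1}` on `(0, 1/2)` (`sign_odd`), obtained by
induction on `m` from strict concavity, since `B_{2m+3}'' = (2m+3)(2m+2) B_{2m+1}`.
-/

/-- `B_n(x)`: the `n`-th Bernoulli polynomial evaluated at the real number `x`. -/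
noncomputable def Bval (n : ℕ) (x : ℝ) : ℝ := Polynomial.aeval x (Polynomial.bernoulli n)

/-- `(x)_{i−1}` as a polynomial in `ℝ[x,y]`: `1` if `i = 0`, and
`x(x+1)⋯(x+i−1)/i!` if `i ≥ 1`. -/
noncomputable def pP (i : ℕ) : MvPolynomial (Fin 2) ℝ :=
  if i = 0 then 1
  else MvPolynomial.C ((Nat.factorial i : ℝ))⁻¹ *
    ∏ j ∈ Finset.range i, (MvPolynomial.X 0 + MvPolynomial.C (j : ℝ))

/-- `(y+i+1)_{k−i−1}` as a polynomial in `ℝ[x,y]`: `1` if `i = k`, and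
`(y+i+1)(y+i+2)⋯(y+k)/(k−i)!` if `i ≤ k−1`. -/
noncomputable def qP (k i : ℕ) : MvPolynomial (Fin 2) ℝ :=
  if i = k then 1
  else MvPolynomial.C ((Nat.factorial (k - i) : ℝ))⁻¹ *
    ∏ j ∈ Finset.Icc (i + 1) k, (MvPolynomial.X 1 + MvPolynomial.C (j : ℝ))

namespace BernoulliNonvanishing

/-! ### Real values of Bernoulli polynomials -/

lemma Bval_zero (x : ℝ) : Bval 0 x = 1 := by simp [Bval]

lemma Bval_one (x : ℝ) : Bval 1 x = x - 1 / 2 := by simp [Bval, Polynomial.bernoulli_one]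

lemma Bval_two (x : ℝ) : Bval 2 x = x ^ 2 - x + 1 / 6 := by
  have h : bernoulli 2 = 1 / 6 := by
    rw [bernoulli_eq_bernoulli'_of_ne_one (by decide), bernoulli'_two, one_div]
  simp [Bval, Polynomial.bernoulli, Finset.sum_range_succ, h, bernoulli_one,
    Polynomial.aeval_monomial, Nat.choose]
  ring

lemma Bval_three (x : ℝ) : Bval 3 x = x * (x - 1 / 2) * (x - 1) := by
  have h : bernoulli 2 = 1 / 6 := by
    rw [bernoulli_eq_bernoulli'_of_ne_one (by decide), bernoulli'_two, one_div]
  have h3 : bernoulli 3 = 0 := by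
    rw [bernoulli_eq_bernoulli'_of_ne_one (by decide), bernoulli'_three]
  simp [Bval, Polynomial.bernoulli, Finset.sum_range_succ, h, h3, bernoulli_one,
    Polynomial.aeval_monomial, Nat.choose]
  ring

lemma hasDerivAt_Bval (n : ℕ) (x : ℝ) :
    HasDerivAt (Bval (n + 1)) ((n + 1) * Bval n x) x := by
  have h := (Polynomial.bernoulli (n + 1)).hasDerivAt_aeval x
  rw [Polynomial.derivative_bernoulli_add_one] at h
  rw [map_mul] at h
  simp only [map_add, map_natCast, map_one] at h
  exact h

lemma continuous_Bval (n : ℕ) : Continuous (Bval n) :=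
  (Polynomial.bernoulli n).continuous_aeval

lemma Bval_neg (n : ℕ) (x : ℝ) :
    Bval n (-x) = (-1) ^ n * (Bval n x + n * x ^ (n - 1)) := by
  have h := congr_arg (Polynomial.aeval x) (Polynomial.bernoulli_comp_neg_X n)
  simpa [Polynomial.aeval_comp, Bval, mul_add] using h

lemma Bval_one_sub (n : ℕ) (x : ℝ) : Bval n (1 - x) = (-1) ^ n * Bval n x := by
  have h := congr_arg (Polynomial.aeval x) (Polynomial.bernoulli_comp_one_sub_X n)
  simpa [Polynomial.aeval_comp, Bval] using h

lemma Bval_odd_zero (m : ℕ) : Bval (2 * m + 3) 0 = 0 := by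
  have h := Bval_neg (2 * m + 3) 0
  rw [Odd.neg_one_pow ⟨m + 1, by ring⟩] at h
  simp at h
  linarith

lemma Bval_odd_half (m : ℕ) : Bval (2 * m + 1) (1 / 2) = 0 := by
  have h := Bval_one_sub (2 * m + 1) (1 / 2)
  rw [Odd.neg_one_pow ⟨m, rfl⟩] at h
  norm_num at h ⊢
  linarith

/-! ### Signs and zeros -/

lemma sign_odd (m : ℕ) {x : ℝ} (hx : x ∈ Set.Ioo (0 : ℝ) (1 / 2)) :
    0 < (-1) ^ (m + 1) * Bval (2 * m + 1) x := by
  induction m generalizing x with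
  | zero => simp [Bval_one]; linarith [hx.2]
  | succ m ih =>
    set f : ℝ → ℝ := fun x => (-1) ^ (m + 2) * Bval (2 * m + 3) x with hf
    have d1 : deriv f = fun x => (-1) ^ (m + 2) * ((2 * m + 3) * Bval (2 * m + 2) x) := by
      ext y
      have := ((hasDerivAt_Bval (2 * m + 2) y).const_mul ((-1) ^ (m + 2))).deriv
      rw [hf, this]; push_cast; ring
    have d2 : deriv (deriv f) =
        fun x => (-1) ^ (m + 2) * ((2 * m + 3) * ((2 * m + 2) * Bval (2 * m + 1) x)) := by
      ext y
      have := (((hasDerivAt_Bval (2 * m + 1) y).const_mul ((2 * m + 3 : ℝ))).const_mul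
        ((-1) ^ (m + 2))).deriv
      rw [d1, this]; push_cast; ring
    have hconc : StrictConcaveOn ℝ (Set.Icc (0 : ℝ) (1 / 2)) f := by
      apply strictConcaveOn_of_deriv2_neg (convex_Icc _ _)
      · exact ((continuous_Bval _).const_mul _).continuousOn
      · intro y hy
        rw [interior_Icc] at hy
        have h := ih hy
        have hc : (0 : ℝ) < (2 * m + 3) * (2 * m + 2) := by positivity
        have := mul_pos hc h
        simp only [Function.iterate_succ, Function.iterate_zero, Function.comp, id, d2]
        rw [pow_succ (-1 : ℝ) (m + 1)]
        linarith
    have h0 : f 0 = 0 := by simp [hf, Bval_odd_zero]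
    have h1 : f (1 / 2) = 0 := by
      have := Bval_odd_half (m + 1)
      simp only [hf]
      rw [show 2 * m + 3 = 2 * (m + 1) + 1 by ring, this, mul_zero]
    -- `x` is a proper convex combination of the zeros `0` and `1/2` of `f`.
    have key := hconc.2 (Set.left_mem_Icc.2 (by norm_num)) (Set.right_mem_Icc.2 (by norm_num))
      (by norm_num) (show 0 < 1 - 2 * x by linarith [hx.2]) (show 0 < 2 * x by linarith [hx.1]) (by ring)
    rw [h0, h1] at key
    simp only [smul_eq_mul, mul_zero, add_zero, zero_add] at key
    rw [show 2 * x * (1 / 2) = x by ring] at key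
    exact key

lemma Bval_odd_ne_zero (m : ℕ) {x : ℝ} (hx : x ∈ Set.Ioo (0 : ℝ) (1 / 2)) :
    Bval (2 * m + 1) x ≠ 0 := by
  intro h
  have := sign_odd m hx
  simp [h] at this

lemma rolle (n : ℕ) {u v : ℝ} (huv : u < v) (h : Bval (n + 1) u = Bval (n + 1) v) :
    ∃ c ∈ Set.Ioo u v, Bval n c = 0 := by
  obtain ⟨c, hc, h⟩ := exists_hasDerivAt_eq_zero huv (continuous_Bval _).continuousOn h
    (fun x _ => hasDerivAt_Bval n x)
  exact ⟨c, hc, (mul_eq_zero.1 h).resolve_left (by positivity)⟩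

/-- For `m ≥ 1`, Rolle gives `B_{2m}` a zero inside `(0, 1/2)`; a further zero at an endpoint would give
`B_{2m-1}` a zero inside `(0, 1/2)`. -/
lemma Bval_even_ne_zero (m : ℕ) : Bval (2 * m) 0 ≠ 0 ∧ Bval (2 * m) (1 / 2) ≠ 0 := by
  cases m with
  | zero => simp [Bval_zero]
  | succ m =>
    obtain ⟨c, hc, hc0⟩ := rolle (2 * m + 2) (u := 0) (v := 1 / 2) (by norm_num)
      (by rw [Bval_odd_zero, show 2 * m + 2 + 1 = 2 * (m + 1) + 1 by ring, Bval_odd_half])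
    constructor
    · intro h
      obtain ⟨d, hd, hd0⟩ := rolle (2 * m + 1) hc.1 (h.trans hc0.symm)
      exact Bval_odd_ne_zero m ⟨hd.1, hd.2.trans hc.2⟩ hd0
    · intro h
      obtain ⟨d, hd, hd0⟩ := rolle (2 * m + 1) hc.2 (hc0.trans h.symm)
      exact Bval_odd_ne_zero m ⟨hc.1.trans hd.1, hd.2⟩ hd0

lemma not_common_zero_left (n : ℕ) {x : ℝ} (hx : x ∈ Set.Icc (0 : ℝ) (1 / 2))
    (h : Bval n x = 0) (h' : Bval (n + 1) x = 0) : False := by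
  rcases hx.1.eq_or_lt with rfl | h0
  · rcases n.even_or_odd' with ⟨m, rfl | rfl⟩
    · exact (Bval_even_ne_zero m).1 h
    · exact (Bval_even_ne_zero (m + 1)).1 h'
  rcases hx.2.eq_or_lt with rfl | h1
  · rcases n.even_or_odd' with ⟨m, rfl | rfl⟩
    · exact (Bval_even_ne_zero m).2 h
    · exact (Bval_even_ne_zero (m + 1)).2 h'
  rcases n.even_or_odd' with ⟨m, rfl | rfl⟩
  · exact Bval_odd_ne_zero m ⟨h0, h1⟩ h'
  · exact Bval_odd_ne_zero m ⟨h0, h1⟩ h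

lemma not_common_zero (n : ℕ) {x : ℝ} (hx : x ∈ Set.Icc (0 : ℝ) 1)
    (h : Bval n x = 0) (h' : Bval (n + 1) x = 0) : False := by
  rcases le_total x (1 / 2) with hx2 | hx2
  · exact not_common_zero_left n ⟨hx.1, hx2⟩ h h'
  · refine not_common_zero_left n (x := 1 - x) ⟨by linarith [hx.2], by linarith⟩ ?_ ?_
    · rw [Bval_one_sub, h, mul_zero]
    · rw [Bval_one_sub, h', mul_zero]

/-- By `B_n(-s) = -(B_n(s) + n s^{n-1})` for odd `n`, where both terms are positive if
`n ≡ 3 mod 4` and `0 < s < 1/2`. -/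
lemma Bval_neg_of_mod_four (j : ℕ) {x : ℝ} (h0 : x < 0) (h1 : -(1 / 2) < x) :
    Bval (4 * j + 3) x < 0 := by
  have hs := sign_odd (2 * j + 1) (x := -x) ⟨by linarith, by linarith⟩
  rw [Even.neg_one_pow ⟨j + 1, by ring⟩, one_mul,
    show 2 * (2 * j + 1) + 1 = 4 * j + 3 by ring] at hs
  have h := Bval_neg (4 * j + 3) (-x)
  rw [neg_neg, Odd.neg_one_pow ⟨2 * j + 1, by ring⟩] at h
  have hp : 0 < (((4 * j + 3 : ℕ) : ℝ)) * (-x) ^ (4 * j + 3 - 1) :=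
    mul_pos (by positivity) (pow_pos (by linarith) _)
  rw [h]
  linarith

/-! ### The products `B_i(a) B_{k-i}(b)` -/

lemma contra_of_nonneg {a b : ℝ} {k : ℕ} (hk : 1 ≤ k)
    (H : ∀ i ≤ k, Bval i a * Bval (k - i) b = 0) (hb : b ∈ Set.Icc (0 : ℝ) 1)
    (ha : a ≠ 1 / 2) : False := by
  obtain ⟨n, rfl⟩ := Nat.exists_eq_add_of_le' hk
  have h0 := H 0 (by omega)
  have h1 := H 1 (by omega)
  rw [Bval_zero, one_mul, Nat.sub_zero] at h0
  rw [Bval_one, Nat.add_sub_cancel] at h1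
  exact not_common_zero n hb ((mul_eq_zero.1 h1).resolve_left (sub_ne_zero.2 ha)) h0

lemma contra_of_neg {a b : ℝ} {k : ℕ} (hk : 1 ≤ k)
    (H : ∀ i ≤ k, Bval i a * Bval (k - i) b = 0) (ha : a < 0) (hb : b < 0)
    (hb' : -(1 / 2) < b) : False := by
  have hpos : ∀ i ≤ 3, ∀ {t : ℝ}, t < 0 → Bval i t ≠ 0 := by
    intro i hi t ht
    interval_cases i
    · simp [Bval_zero]
    · rw [Bval_one]; linarith
    · rw [Bval_two]; nlinarith [sq_nonneg t]
    · rw [Bval_three]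
      exact mul_ne_zero (mul_ne_zero ht.ne (by linarith)) (by linarith)
  have hB : ∀ i ≤ 3, i ≤ k → Bval (k - i) b = 0 := fun i hi hik =>
    (mul_eq_zero.1 (H i hik)).resolve_left (hpos i hi ha)
  by_cases hk3 : k < 3
  · exact hpos k hk3.le hb (hB 0 (by norm_num) (by omega))
  · -- `(k + 1) % 4` is the offset from `k` down to the nearest index `≡ 3 mod 4`.
    have h := hB ((k + 1) % 4) (by omega) (by omega)
    rw [show k - (k + 1) % 4 = 4 * ((k + 1) / 4 - 1) + 3 by omega] at h
    exact (Bval_neg_of_mod_four _ hb hb').ne h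

lemma reverse_products {a b : ℝ} {k : ℕ} (H : ∀ i ≤ k, Bval i a * Bval (k - i) b = 0) :
    ∀ i ≤ k, Bval i b * Bval (k - i) a = 0 := by
  intro i hi
  have h := H (k - i) (by omega)
  rw [Nat.sub_sub_self hi] at h
  rw [mul_comm, h]

lemma false_of_products_eq_zero {a b : ℝ} {k : ℕ} (hk : 1 ≤ k) (ha : a < 1) (hb : b < 1)
    (hab : -1 < a + b) (hab' : a + b < 1)
    (H : ∀ i ≤ k, Bval i a * Bval (k - i) b = 0) : False := by
  have H' := reverse_products H
  rcases lt_or_ge b 0 with hb0 | hb0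
  · rcases lt_or_ge a 0 with ha0 | ha0
    · rcases lt_or_ge (-(1 / 2)) b with h | h
      · exact contra_of_neg hk H ha0 hb0 h
      · exact contra_of_neg hk H' hb0 ha0 (by linarith)
    · exact contra_of_nonneg hk H' ⟨ha0, ha.le⟩ (by linarith)
  · by_cases h : a = 1 / 2
    · exact contra_of_nonneg hk H' ⟨by linarith, ha.le⟩ (by linarith)
    · exact contra_of_nonneg hk H ⟨hb0, hb.le⟩ h

/-! ### Linear independence -/

/-- Evaluating at `x = -N` kills the terms with `i > N`, so the products vanish one after the
other for `N = 0, 1, …, k`; at `y = 0` the second factor of the `N`-th term is nonzero. -/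
lemma prod_eq_zero_of_sum_eq_zero {k : ℕ} (c : ℕ → ℕ → ℝ) (d : ℕ → ℕ → ℝ)
    (h : (∑ i ∈ Finset.range (k + 1),
      pP i * qP k i * MvPolynomial.C (c k i) * MvPolynomial.C (d k i)) = 0) :
    ∀ i ≤ k, c k i * d k i = 0 := by
  intro N
  induction N using Nat.strong_induction_on with
  | _ N ih =>
  intro hN
  have e := congr_arg (MvPolynomial.eval ![-(N : ℝ), 0]) h
  rw [map_sum, map_zero, Finset.sum_eq_single_of_mem N (by simp; omega)] at e
  · simp only [map_mul, MvPolynomial.eval_C, mul_assoc] at e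
    have h1 : MvPolynomial.eval ![-(N : ℝ), 0] (pP N) ≠ 0 := by
      unfold pP
      split_ifs with h0
      · simp
      · simp only [map_mul, MvPolynomial.eval_C, map_prod, map_add, MvPolynomial.eval_X]
        refine mul_ne_zero (by positivity) (Finset.prod_ne_zero_iff.2 fun j hj => ?_)
        have : (j : ℝ) < N := by exact_mod_cast Finset.mem_range.1 hj
        simp only [Matrix.cons_val_zero]
        linarith
    have h2 : MvPolynomial.eval ![-(N : ℝ), 0] (qP k N) ≠ 0 := by
      unfold qP
      split_ifs with h0
      · simp
      · simp only [map_mul, MvPolynomial.eval_C, map_prod, map_add, MvPolynomial.eval_X]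
        refine mul_ne_zero (by positivity) (Finset.prod_ne_zero_iff.2 fun j hj => ?_)
        have : 0 < j := by have := (Finset.mem_Icc.1 hj).1; omega
        simp
        omega
    exact ((mul_eq_zero.1 ((mul_eq_zero.1 e).resolve_left h1)).resolve_left h2)
  · intro i hi hiN
    rcases lt_or_gt_of_ne hiN with hlt | hgt
    · simp only [map_mul, MvPolynomial.eval_C]
      rw [mul_assoc, ih i hlt (by omega), mul_zero]
    · have h1 : MvPolynomial.eval ![-(N : ℝ), 0] (pP i) = 0 := by
        unfold pP
        rw [if_neg (by omega)]
        simp only [map_mul, map_prod, map_add, MvPolynomial.eval_X, MvPolynomial.eval_C]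
        rw [Finset.prod_eq_zero (Finset.mem_range.2 hgt) (by simp), mul_zero]
      simp [h1]

end BernoulliNonvanishing

/-- **Lemma 2 (key nonvanishing).** For `α, β, γ ∈ [0,1)` and `k ≥ 1`, the polynomial
`∑_{i=0}^{k} (x)_{i−1} (y+i+1)_{k−i−1} B_i(β−α) B_{k−i}(γ−β)` is nonzero in `ℝ[x,y]`. -/
theorem stmt_15 (α β γ : ℝ) (hα : α ∈ Set.Ico (0 : ℝ) 1) (hβ : β ∈ Set.Ico (0 : ℝ) 1)
    (hγ : γ ∈ Set.Ico (0 : ℝ) 1) (k : ℕ) (hk : 1 ≤ k) :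
    (∑ i ∈ Finset.range (k + 1),
        pP i * qP k i * MvPolynomial.C (Bval i (β - α)) * MvPolynomial.C (Bval (k - i) (γ - β)))
      ≠ 0 := by
  intro h
  refine BernoulliNonvanishing.false_of_products_eq_zero (a := β - α) (b := γ - β) hk
    (by linarith [hα.1, hβ.2]) (by linarith [hβ.1, hγ.2]) (by linarith [hα.2, hγ.1])
    (by linarith [hα.1, hγ.2]) ?_
  exact BernoulliNonvanishing.prod_eq_zero_of_sum_eq_zero (fun _ i => Bval i (β - α))
    (fun k i => Bval (k - i) (γ - β)) h
end

section
/- Let r ≥ 2 be an integer and α_1,…,α_r ∈ [0,1). Let S be the collection of hyperplanes consisting of H_{1,0} together with H_{i,k} for 2 ≤ i ≤ r and integers k ≥ 0, EXCEPT those H_{2,k} with B_k(α_2−α_1) = 0. Then: (a) there exists a function F analytic on ℂ^r ∖ ⋃_{H∈S} H with F(s) = ζ_r(s; α_1,…,α_r) for all s ∈ U_r, such that for every point p ∈ ℂ^r the function s ↦ (∏_{H_{i,k}∈S, p∈H_{i,k}} (s_1+⋯+s_i−i+k)) · F(s) extends analytically to a neighborhood of p (all poles are simple); and (b) every member of S is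 a genuine polar hyperplane: for each H_{i,k} ∈ S there exists a point p ∈ H_{i,k} lying on no other member of S such that (s_1+⋯+s_i−i+k)·F(s) tends to a nonzero limit as s → p within ℂ^r ∖ ⋃_{H∈S} H. -/
/-! In the coordinates `w_i = s_1 + ⋯ + s_i - i` the hyperplane `H_{i,k}` is `w_i = -k`, and convergence
means `Re w_i > 0` for all `i`. Let `Z(w)` be the zeta function of depth `d` in these coordinates,
`Z'` the one of depth `d - 1` obtained by dropping the outermost variable, and `b = α₂ - α₁`.

*Functional equation.* The identity `∑_{k ≤ m} C(m+1, k) B_k(b) = (m + 1) b^m` says exactly that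
`w (n + α₁)^{-w-1}` and `∑_{k < K} B_k(b) (w)_k / k! · ((n - 1 + α₂)^{-w-k} - (n + α₂)^{-w-k})` have
the same expansion in powers of `1 / (n + α₂)` up to an error `O(n^{-Re w - K - 1})`
(`coeff_identity`, `eK_bound`). Summation by parts in the outermost index then gives (`fe_succ`)

  `w_1 Z(w) = A_K(w) + ∑_{k < K} B_k(b) (w_1)_k / k! · Z'(w_2 + k, …, w_d + k)`,

where `A_K` is a locally normally convergent series of entire functions on `Re w_i > 2 - K`, hence
analytic there (`AK_analytic`, which rests on Osgood's lemma `osgood`).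

*Continuation.* By induction on the depth the right-hand side is meromorphic, with simple poles on
hyperplanes `w_i = -k` only, and dividing by `w_1` adds `w_1 = 0` (`exists_good`). A term whose
coefficient `B_k(b)` vanishes does not contribute, which explains the exceptional `H_{2,k}`.

*Genuine poles.* Along `w_1 = 0` the residue is `Z'`, a series of positive terms at real points of
convergence (`gen_zero`). Along `w_i = -j` with `i ≥ 2` the residue at a point is
`w_1⁻¹ ∑_k B_k(b) / k! · ρ_k · (w_1)_k`, where `ρ_k` is the residue of `Z'` along `w_i = -(j - k)` at
the shifted point and does not depend on `w_1`. The polynomials `(w_1)_k` have distinct degrees, so a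
single `k` with `B_k(b) ρ_k ≠ 0` makes the sum nonzero for some `w_1` (`exists_ph_ne_zero`,
`gen_succ`). For `i ≥ 4` take `k = 0`, and for `i = 2` take `k = j`. For `i = 3` one needs
`k + l = j` with `B_k(α₂ - α₁) B_l(α₃ - α₂) ≠ 0`. If there is no such pair, then
`α₂ - α₁ = α₃ - α₂ = 1/2`, so `α₃ - α₁ = 1`, contradicting `α ∈ [0, 1)` (`exists_nonzero_pair`). This
uses that `B_{2m}` and `B_{2m+1}` have no common real zero for `m ≥ 1` (`no_consecutive_zeros`), a
consequence of the von Staudt–Clausen theorem at the prime `2`.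
-/

open Complex

/-- `e(a) = e^{2πia}`. -/
noncomputable def eR (a : ℝ) : ℂ := Complex.exp (2 * Real.pi * Complex.I * a)

/-- For a real `b > 0` and `z ∈ ℂ`, `b^z := exp (z log b)` (real logarithm). -/
noncomputable def rpowC (b : ℝ) (z : ℂ) : ℂ := Complex.exp (z * Real.log b)

/-- Strictly decreasing tuples of positive integers `n_1 > n_2 > ⋯ > n_r > 0`. -/
def DTuple (r : ℕ) : Type := {n : Fin r → ℕ // StrictAnti n ∧ ∀ i, 0 < n i}

/-- The term `e(λ_1 n_1)⋯e(λ_r n_r) / ((n_1+α_1)^{s_1}⋯(n_r+α_r)^{s_r})`. -/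
noncomputable def lerchTerm {r : ℕ} (lam al : Fin r → ℝ) (s : Fin r → ℂ)
    (n : Fin r → ℕ) : ℂ :=
  (∏ i, eR (lam i * n i)) / ∏ i, rpowC ((n i : ℝ) + al i) (s i)

/-- The multiple Lerch zeta function (as a sum over strictly decreasing tuples). -/
noncomputable def multipleLerch {r : ℕ} (lam al : Fin r → ℝ) (s : Fin r → ℂ) : ℂ :=
  ∑' n : DTuple r, lerchTerm lam al s n.1

/-- The term `(n_1+α_1)^{-s_1}⋯(n_r+α_r)^{-s_r}`. -/
noncomputable def hzTerm {r : ℕ} (al : Fin r → ℝ) (s : Fin r → ℂ) (n : Fin r → ℕ) : ℂ :=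
  ∏ i, rpowC ((n i : ℝ) + al i) (-(s i))

/-- The multiple Hurwitz zeta function (as a sum over strictly decreasing tuples). -/
noncomputable def multipleHurwitz {r : ℕ} (al : Fin r → ℝ) (s : Fin r → ℂ) : ℂ :=
  ∑' n : DTuple r, hzTerm al s n.1

/-- `U_r(m) = {s ∈ ℂ^r : Re(s_1+⋯+s_i) > i − m for 1 ≤ i ≤ r}` (0-based indexing). -/
def Ur (r : ℕ) (m : ℤ) : Set (Fin r → ℂ) :=
  {s | ∀ i : Fin r, ((i : ℕ) + 1 - m : ℝ) < (∑ j ∈ Finset.Iic i, s j).re}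

/-- `(s)_k = s(s+1)⋯(s+k)/(k+1)!` for `k ≥ 0` and `(s)_k = 1` for `k < 0`. -/
noncomputable def pochZ (s : ℂ) (k : ℤ) : ℂ :=
  if 0 ≤ k then (∏ j ∈ Finset.range (k.toNat + 1), (s + j)) / (Nat.factorial (k.toNat + 1))
  else 1

/-- The hyperplane `H_{i,k} : s_1 + ⋯ + s_i = i − k` (0-based: `i` here is paper's `i−1`). -/
def Hplane (r : ℕ) (i : Fin r) (k : ℕ) : Set (Fin r → ℂ) :=
  {s | ∑ j ∈ Finset.Iic i, s j = ((i : ℕ) + 1 : ℂ) - k}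

/-- The union of the hyperplanes `H_{i,k}` for `(i,k)` satisfying the predicate `P`. -/
def polarSet {r : ℕ} (P : Fin r → ℕ → Prop) : Set (Fin r → ℂ) :=
  {s | ∃ i k, P i k ∧ s ∈ Hplane r i k}

/-- `F` has (at most) simple poles along the hyperplanes `H_{i,k}`, `(i,k) ∈ P`:
around every point `p`, multiplying `F` by the (finitely many) linear factors
`s_1+⋯+s_i−i+k` of the members of `P` passing through `p` yields a function
that extends analytically to a neighbourhood of `p`. -/
def SimplePolesAlong {r : ℕ} (P : Fin r → ℕ → Prop) (F : (Fin r → ℂ) → ℂ) : Prop :=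
  ∀ p : Fin r → ℂ, ∀ T : Finset (Fin r × ℕ),
    (∀ i k, (i, k) ∈ T ↔ (P i k ∧ p ∈ Hplane r i k)) →
    ∃ (V : Set (Fin r → ℂ)) (G : (Fin r → ℂ) → ℂ),
      IsOpen V ∧ p ∈ V ∧ AnalyticOnNhd ℂ G V ∧
      ∀ s ∈ V, s ∉ polarSet P →
        G s = (∏ q ∈ T, ((∑ j ∈ Finset.Iic q.1, s j) - ((q.1 : ℕ) + 1 : ℂ) + (q.2 : ℂ))) * F s

/-- `H_{i,k}` is a genuine (simple) polar hyperplane of `F`: there is a point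
`p ∈ H_{i,k}` lying on no other member of the collection `P` such that
`(s_1+⋯+s_i−i+k)·F(s)` tends to a nonzero limit as `s → p` off the polar set. -/
def GenuinePole {r : ℕ} (P : Fin r → ℕ → Prop) (F : (Fin r → ℂ) → ℂ)
    (i : Fin r) (k : ℕ) : Prop :=
  ∃ p ∈ Hplane r i k,
    (∀ (i' : Fin r) (k' : ℕ), P i' k' → ¬(i' = i ∧ k' = k) → p ∉ Hplane r i' k') ∧
    ∃ L : ℂ, L ≠ 0 ∧
      Filter.Tendsto
        (fun s : Fin r → ℂ => ((∑ j ∈ Finset.Iic i, s j) - ((i : ℕ) + 1 : ℂ) + (k : ℂ)) * F s)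
        (nhdsWithin p (polarSet P)ᶜ) (nhds L)

/-- **Theorem 3 (exact set of singularities of the multiple Hurwitz zeta function).**
The collection `S`: `H_{1,0}`, and `H_{i,k}` for `2 ≤ i ≤ r`, `k ≥ 0`, except the
`H_{2,k}` with `B_k(α_2−α_1) = 0` (0-based indexing of `i`). -/
def S17 (r : ℕ) (b : ℝ) (i : Fin (r + 2)) (k : ℕ) : Prop :=
  ((i : ℕ) = 0 ∧ k = 0) ∨
    ((i : ℕ) = 1 ∧ (Polynomial.aeval b (Polynomial.bernoulli k) : ℝ) ≠ 0) ∨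
    2 ≤ (i : ℕ)

/-! ### Bernoulli polynomials -/

/-- The `2`-adic valuation extends to `ℝ`: some valuation subring of `ℝ` has `2` as a non-unit. -/
theorem exists_dyadic_valuation : ∃ V : ValuationSubring ℝ, V.valuation 2 < 1 := by
  let A : Subring ℝ := (Int.castRingHom ℝ).range
  let two : A := ⟨2, ⟨2, by simp⟩⟩
  have hI : Ideal.span {two} ≠ ⊤ := by
    intro h
    rw [Ideal.span_singleton_eq_top] at h
    obtain ⟨⟨b, ⟨m, hm⟩⟩, hb⟩ := isUnit_iff_exists_inv.1 h
    have h2 : (2 : ℝ) * b = 1 := congrArg Subtype.val hb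
    rw [← hm] at h2
    have h3 : (2 : ℤ) * m = 1 := by
      have : ((2 * m : ℤ) : ℝ) = 1 := by simpa using h2
      exact_mod_cast this
    omega
  obtain ⟨V, -, hV⟩ := Ideal.image_subset_nonunits_valuationSubring (A := A) _ hI
  refine ⟨V, ?_⟩
  rw [← ValuationSubring.mem_nonunits_iff]
  exact hV ⟨two, Ideal.mem_span_singleton_self _, rfl⟩

section dyadic
variable {V : ValuationSubring ℝ}

theorem val_int_le (n : ℤ) : V.valuation (n : ℝ) ≤ 1 :=
  (V.valuation_le_one_iff _).2 (by simp)

theorem val_nat_le (n : ℕ) : V.valuation (n : ℝ) ≤ 1 := by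
  exact_mod_cast val_int_le (V := V) n

theorem val_odd (hV : V.valuation 2 < 1) (n : ℤ) (hn : Odd n) : V.valuation (n : ℝ) = 1 := by
  obtain ⟨m, rfl⟩ := hn
  have h1 : V.valuation ((2 * m : ℝ)) < 1 := by
    rw [map_mul]
    exact mul_lt_one_of_lt_of_le hV (val_int_le m)
  have := Valuation.map_one_add_of_lt V.valuation h1
  rw [← this]
  congr 1
  push_cast; ring

/-- The von Staudt–Clausen theorem at the prime `2`, in a form valid for all `k`: the difference
`B_k - ([k even] + [k = 0] + [k = 1]) / 2` is `2`-integral. The last two brackets account for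
`B_0 = 1` and `B_1 = -1/2`. -/
theorem val_bernoulli (hV : V.valuation 2 < 1) (k : ℕ) :
    V.valuation ((bernoulli k : ℚ) - ((if Even k then 1 else 0) + (if k = 0 then 1 else 0)
      + (if k = 1 then 1 else 0)) / 2 : ℝ) ≤ 1 := by
  rcases Nat.even_or_odd k with hk | hk
  · rcases Nat.eq_zero_or_pos k with rfl | hpos
    · norm_num
    · obtain ⟨j, rfl⟩ := hk.two_dvd
      have hj : 0 < j := by omega
      obtain ⟨z, hz⟩ := Bernoulli.vonStaudt_clausen j
      set S := (Finset.range (2 * j + 2)).filter fun p => p.Prime ∧ (p - 1) ∣ 2 * j with hS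
      have h2 : 2 ∈ S := by
        rw [hS]; simp [Nat.prime_two]; omega
      rw [← Finset.add_sum_erase S _ h2] at hz
      have e : ((bernoulli (2 * j) : ℚ) : ℝ) - ((if Even (2 * j) then 1 else 0)
          + (if 2 * j = 0 then 1 else 0) + (if 2 * j = 1 then 1 else 0)) / 2
          = (z : ℝ) - 1 - ∑ p ∈ S.erase 2, (1 : ℝ) / p := by
        have : ((bernoulli (2 * j) : ℚ) : ℝ) = (z : ℝ) - (1 / 2 + ∑ p ∈ S.erase 2, (1 : ℝ) / p) := by
          have h3 := congrArg (fun q : ℚ => (q : ℝ)) hz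
          push_cast at h3
          rw [h3]; ring
        rw [this, if_pos hk, if_neg (by omega), if_neg (by omega)]
        ring
      rw [e]
      refine V.valuation.map_sub_le (V.valuation.map_sub_le (val_int_le _) (by simp)) ?_
      refine V.valuation.map_sum_le fun p hp => ?_
      rw [Finset.mem_erase, hS, Finset.mem_filter] at hp
      have := val_odd hV (p : ℤ) (by exact_mod_cast hp.2.2.1.odd_of_ne_two hp.1)
      have h4 : V.valuation (p : ℝ) = 1 := by exact_mod_cast this
      rw [map_div₀, h4]; simp
  · rcases eq_or_ne k 1 with rfl | h1
    · norm_num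
    · have h0 : k ≠ 0 := by rintro rfl; simp at hk
      rw [bernoulli_eq_zero_of_odd hk (by have := hk.pos; omega)]
      simp [Nat.not_even_iff_odd.2 hk, h0, h1]

end dyadic

/-- The value `B_k(x)` of the Bernoulli polynomial at a real number. -/
noncomputable def Bv (k : ℕ) (x : ℝ) : ℝ := Polynomial.aeval x (Polynomial.bernoulli k)

theorem Bv_eq (n : ℕ) (x : ℝ) :
    Bv n x = ∑ k ∈ Finset.range (n + 1), (n.choose k : ℝ) * (bernoulli k : ℚ) * x ^ (n - k) := by
  simp only [Bv, Polynomial.bernoulli, map_sum, Polynomial.aeval_monomial]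
  refine Finset.sum_congr rfl fun k _ => ?_
  simp only [map_mul, eq_ratCast, map_natCast]; ring

theorem even_sum (n : ℕ) (x : ℝ) :
    ∑ k ∈ Finset.range (n + 1), (n.choose k : ℝ) * (if Even k then 1 else 0) * x ^ (n - k)
      = ((x + 1) ^ n + (x - 1) ^ n) / 2 := by
  rw [add_comm x 1, sub_eq_neg_add, add_pow, add_pow, ← Finset.sum_add_distrib, Finset.sum_div]
  refine Finset.sum_congr rfl fun k _ => ?_
  rcases Nat.even_or_odd k with hk | hk
  · rw [if_pos hk, hk.neg_one_pow]; ring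
  · simp [Nat.not_even_iff_odd.2 hk, hk.neg_one_pow]

/-- For `m ≥ 1` the polynomials `B_{2m}` and `B_{2m+1}` have no common real zero. Both equations are
read modulo the maximal ideal of a dyadic valuation ring of `ℝ`, and each of the cases `x` integral,
`x` not integral ends in `1 ≡ 0`. -/
theorem no_consecutive_zeros (m : ℕ) (hm : 1 ≤ m) (x : ℝ) (h1 : Bv (2 * m + 1) x = 0)
    (h2 : Bv (2 * m) x = 0) : False := by
  obtain ⟨V, hV⟩ := exists_dyadic_valuation
  set v := V.valuation with hv
  by_cases hx : v x ≤ 1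
  · -- By `val_bernoulli`, `B_n(x) = 0` reads `E n + x ^ n + n x ^ (n - 1) ≡ 0`. Here the division by
    -- two is harmless: `E n` is a polynomial in `x` with integer coefficients.
    set E : ℕ → ℝ := fun n => ((x + 1) ^ n + (x - 1) ^ n) / 2 with hE
    have key : ∀ n, 1 ≤ n → Bv n x = 0 → v (E n + x ^ n + n * x ^ (n - 1)) < 1 := by
      intro n hn h0
      have e : E n + x ^ n + n * x ^ (n - 1) = -2 * ∑ k ∈ Finset.range (n + 1), (n.choose k : ℝ) *
          ((bernoulli k : ℚ) - ((if Even k then 1 else 0) + (if k = 0 then 1 else 0)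
      + (if k = 1 then 1 else 0)) / 2 : ℝ) * x ^ (n - k) := by
        have a1 : ∑ k ∈ Finset.range (n + 1), (n.choose k : ℝ) * (if k = 0 then 1 else 0) * x ^ (n - k)
            = x ^ n := by
          simp
        have a2 : ∑ k ∈ Finset.range (n + 1), (n.choose k : ℝ) * (if k = 1 then 1 else 0) * x ^ (n - k)
            = n * x ^ (n - 1) := by
          simp
          omega
        have a3 := even_sum n x
        rw [hE]; simp only
        rw [← a3, ← a1, ← a2]
        have : Bv n x = 0 := h0
        rw [Bv_eq] at this
        rw [← Finset.sum_add_distrib, ← Finset.sum_add_distrib, Finset.mul_sum,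
          ← add_zero (∑ i ∈ _, _), ← neg_zero, ← mul_zero 2, ← this, Finset.mul_sum,
          ← Finset.sum_neg_distrib, ← Finset.sum_add_distrib]
        refine Finset.sum_congr rfl fun k _ => ?_
        ring
      rw [e, map_mul, Valuation.map_neg]
      refine mul_lt_one_of_lt_of_le hV (v.map_sum_le fun k _ => ?_)
      rw [map_mul, map_mul, map_pow]
      exact mul_le_one' (mul_le_one' (val_nat_le _) (val_bernoulli hV k)) (pow_le_one' hx _)
    have k1 := key _ (by omega) h1
    have k2 := key _ (by omega) h2
    have hstep : ∀ n, E (n + 1) = (x - 1) * E n + (x + 1) ^ n := by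
      intro n; simp only [hE]; ring
    have hEv : ∀ n, v (E n) ≤ 1 := by
      intro n
      induction n with
      | zero => simp [hE]
      | succ n ih =>
        rw [hstep]
        refine v.map_add_le ?_ ?_
        · rw [map_mul]; exact mul_le_one' (v.map_sub_le hx (by simp)) ih
        · rw [map_pow]; exact pow_le_one' (v.map_add_le hx (by simp)) _
    have hp : v ((x + 1) ^ (2 * m)) < 1 := by
      have e : (x + 1) ^ (2 * m) = (E (2 * m + 1) + x ^ (2 * m + 1) + ((2 * m + 1 : ℕ) : ℝ) * x ^ (2 * m))
          - (x - 1) * (E (2 * m) + x ^ (2 * m) + ((2 * m : ℕ) : ℝ) * x ^ (2 * m - 1))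
          + 2 * (m * x ^ (2 * m - 1) * (x - 1) - (m + 1) * x ^ (2 * m)) := by
        rw [hstep]; push_cast; ring
      rw [e]
      refine v.map_add_lt (lt_of_le_of_lt (v.map_sub _ _) (max_lt k1 ?_)) ?_
      · rw [map_mul]
        rw [mul_comm]; exact mul_lt_one_of_lt_of_le k2 (v.map_sub_le hx (by simp))
      · rw [map_mul]
        refine mul_lt_one_of_lt_of_le hV (v.map_sub_le ?_ ?_)
        · rw [map_mul, map_mul, map_pow]
          exact mul_le_one' (mul_le_one' (val_nat_le _) (pow_le_one' hx _)) (v.map_sub_le hx (by simp))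
        · rw [map_mul, map_pow]
          refine mul_le_one' ?_ (pow_le_one' hx _)
          exact_mod_cast val_nat_le (V := V) (m + 1)
    -- So `x ≡ 1`, hence `E (2 * m) ≡ 0`, and the equation for `2 * m` forces `x ≡ 0`.
    have hx1 : v (x + 1) < 1 := by
      by_contra hcon
      rw [map_pow] at hp
      exact absurd (one_le_pow_of_one_le' (not_lt.1 hcon) (2 * m)) (not_le.2 hp)
    have hx2 : v (x - 1) < 1 := by
      have : x - 1 = (x + 1) - 2 := by ring
      rw [this]
      exact lt_of_le_of_lt (v.map_sub _ _) (max_lt hx1 hV)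
    have hE2 : v (E (2 * m)) < 1 := by
      obtain ⟨j, hj⟩ : ∃ j, 2 * m = j + 1 := ⟨2 * m - 1, by omega⟩
      rw [hj, hstep]
      refine v.map_add_lt ?_ ?_
      · rw [map_mul]; exact mul_lt_one_of_lt_of_le hx2 (hEv _)
      · rw [map_pow]; exact pow_lt_one₀ zero_le hx1 (by omega)
    have hx3 : v (x ^ (2 * m)) < 1 := by
      have e : x ^ (2 * m) = (E (2 * m) + x ^ (2 * m) + ((2 * m : ℕ) : ℝ) * x ^ (2 * m - 1))
        - E (2 * m) - 2 * (m * x ^ (2 * m - 1)) := by push_cast; ring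
      rw [e]
      refine lt_of_le_of_lt (v.map_sub _ _) (max_lt (lt_of_le_of_lt (v.map_sub _ _)
        (max_lt k2 hE2)) ?_)
      rw [map_mul]
      refine mul_lt_one_of_lt_of_le hV ?_
      rw [map_mul, map_pow]
      exact mul_le_one' (val_nat_le _) (pow_le_one' hx _)
    have hx4 : v x < 1 := by
      by_contra hcon
      rw [map_pow] at hx3
      exact absurd (one_le_pow_of_one_le' (not_lt.1 hcon) (2 * m)) (not_le.2 hx3)
    have : v (1 : ℝ) < 1 := by
      have e : (1 : ℝ) = (x + 1) - x := by ring
      rw [e]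
      exact lt_of_le_of_lt (v.map_sub _ _) (max_lt hx1 hx4)
    simp at this
  · -- After division by `x ^ (n - 1) / 2`, only the two leading terms of `B_n(x) = 0` survive modulo
    -- the maximal ideal, so `2 x ≡ n`; this cannot hold for two consecutive `n`.
    have hx0 : x ≠ 0 := by rintro rfl; simp at hx
    have hc : v x⁻¹ < 1 := by
      rw [map_inv₀]; exact inv_lt_one_of_one_lt₀ (not_le.1 hx)
    have hB : ∀ k, v (2 * (bernoulli k : ℚ) : ℝ) ≤ 1 := by
      intro k
      have e : (2 * (bernoulli k : ℚ) : ℝ) = 2 * ((bernoulli k : ℚ) - ((if Even k then 1 else 0)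
        + (if k = 0 then 1 else 0) + (if k = 1 then 1 else 0)) / 2 : ℝ) +
        (((if Even k then 1 else 0) + (if k = 0 then 1 else 0) + (if k = 1 then 1 else 0) : ℕ) : ℝ) := by
        push_cast; ring
      rw [e]
      refine v.map_add_le ?_ (val_nat_le _)
      rw [map_mul]
      exact mul_le_one' hV.le (val_bernoulli hV k)
    have key : ∀ n, 1 ≤ n → Bv n x = 0 → v (2 * x - n) < 1 := by
      intro n hn h0
      obtain ⟨j, rfl⟩ : ∃ j, n = j + 1 := ⟨n - 1, by omega⟩
      have e : 2 * x - ((j + 1 : ℕ) : ℝ) = - ∑ k ∈ Finset.range j, ((j + 1).choose (k + 2) : ℝ) *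
          (2 * (bernoulli (k + 2) : ℚ)) * x⁻¹ ^ (k + 1) := by
        have h3 := h0
        rw [Bv_eq, Finset.sum_range_succ', Finset.sum_range_succ'] at h3
        have h4 : (2 * x⁻¹ ^ j) * (∑ k ∈ Finset.range j, ((j + 1).choose (k + 1 + 1) : ℝ) *
          (bernoulli (k + 1 + 1) : ℚ) * x ^ (j + 1 - (k + 1 + 1))) = ∑ k ∈ Finset.range j, ((j + 1).choose (k + 2) : ℝ) *
          (2 * (bernoulli (k + 2) : ℚ)) * x⁻¹ ^ (k + 1) := by
          rw [Finset.mul_sum]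
          refine Finset.sum_congr rfl fun k hk => ?_
          rw [Finset.mem_range] at hk
          obtain ⟨i, rfl⟩ : ∃ i, j = k + 1 + i := ⟨j - (k + 1), by omega⟩
          rw [show k + 1 + i + 1 - (k + 1 + 1) = i by omega]
          have : x⁻¹ ^ i * x ^ i = 1 := by rw [← mul_pow, inv_mul_cancel₀ hx0, one_pow]
          rw [pow_add x⁻¹ (k + 1) i]
          linear_combination (2 * x⁻¹ ^ (k + 1) * ((k + 1 + i + 1).choose (k + 2) : ℝ) * (bernoulli (k + 2) : ℚ)) * this
        rw [← h4]
        have h5 : x⁻¹ ^ j * x ^ j = 1 := by rw [← mul_pow, inv_mul_cancel₀ hx0, one_pow]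
        simp at h3 h4 ⊢
        have h7 : (x ^ j)⁻¹ * x ^ j = 1 := by simpa using h5
        linear_combination (2 * (x ^ j)⁻¹) * h3 - (2 * x - (j + 1)) * h7
      rw [e, Valuation.map_neg]
      refine v.map_sum_lt one_ne_zero fun k _ => ?_
      rw [map_mul, map_mul, map_pow]
      rw [mul_comm]
      exact mul_lt_one_of_lt_of_le (pow_lt_one₀ zero_le hc (by omega))
        (mul_le_one' (val_nat_le _) (hB _))
    have k1 := key _ (by omega) h1
    have k2 := key _ (by omega) h2
    have : v (1 : ℝ) < 1 := by
      have e : (1 : ℝ) = (2 * x - (2 * m : ℕ)) - (2 * x - (2 * m + 1 : ℕ)) := by push_cast; ring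
      rw [e]
      exact lt_of_le_of_lt (v.map_sub _ _) (max_lt k2 k1)
    simp at this

theorem Bv_zero (x : ℝ) : Bv 0 x = 1 := by simp [Bv]
theorem Bv_one (x : ℝ) : Bv 1 x = x - 1 / 2 := by
  simp [Bv_eq, Finset.sum_range_succ]; ring
theorem Bv_two (x : ℝ) : Bv 2 x = x ^ 2 - x + 1 / 6 := by
  have := bernoulli_two
  simp [Bv_eq, Finset.sum_range_succ, this]; ring
theorem Bv_four (x : ℝ) : Bv 4 x = (x ^ 2 - x) ^ 2 - 1 / 30 := by
  have h4 : bernoulli 4 = -1 / 30 := by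
    rw [bernoulli_eq_bernoulli'_of_ne_one (by norm_num)]; exact bernoulli'_four
  have h3 : bernoulli 3 = 0 := bernoulli_eq_zero_of_odd (by decide) (by norm_num)
  simp [Bv_eq, Finset.sum_range_succ, bernoulli_two, h3, h4, Nat.choose]; ring

/-- If no pair `i + j = k` has `B_i(x) B_j(y) ≠ 0`, then `x = 1/2`. Otherwise `B_0(x)` and `B_1(x)` are
nonzero, so `B_k(y) = B_{k-1}(y) = 0` and `k = 2m` is even; applying `no_consecutive_zeros` alternately to
`y` and `x` gives `B_2(x) = B_4(x) = 0`, which is impossible. For `k = 2` already `B_2(y) = B_1(y) = 0`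
is impossible. -/
theorem half_of_forall (k : ℕ) (x y : ℝ) (h : ∀ i j, i + j = k → Bv i x = 0 ∨ Bv j y = 0) :
    x = 1 / 2 := by
  by_contra hx
  have hb1 : Bv 1 x ≠ 0 := by rw [Bv_one]; intro h; exact hx (by linarith)
  have hk : Bv k y = 0 := (h 0 k (by omega)).resolve_left (by simp [Bv_zero])
  have hk0 : k ≠ 0 := by rintro rfl; simp [Bv_zero] at hk
  have hk1 : Bv (k - 1) y = 0 := (h 1 (k - 1) (by omega)).resolve_left hb1
  have hk1' : k ≠ 1 := by rintro rfl; simp [Bv_zero] at hk1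
  rcases Nat.even_or_odd' k with ⟨m, rfl | rfl⟩
  · rcases Nat.lt_or_ge m 2 with hm | hm
    · obtain rfl : m = 1 := by omega
      norm_num at hk hk1
      rw [Bv_two] at hk; rw [Bv_one] at hk1
      have : y = 1 / 2 := by linarith
      rw [this] at hk; norm_num at hk
    obtain ⟨j, rfl⟩ : ∃ j, m = j + 2 := ⟨m - 2, by omega⟩
    have h2 : Bv 2 x = 0 := by
      refine (h 2 (2 * (j + 1)) (by omega)).resolve_right fun h0 => ?_
      exact no_consecutive_zeros (j + 1) (by omega) y (by convert hk1 using 2; omega) h0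
    have h3 : Bv (2 * j + 1) y = 0 := by
      refine (h 3 (2 * j + 1) (by omega)).resolve_left fun h0 => ?_
      exact no_consecutive_zeros 1 le_rfl x h0 h2
    have h4 : Bv 4 x = 0 := by
      refine (h 4 (2 * j) (by omega)).resolve_right fun h0 => ?_
      rcases Nat.eq_zero_or_pos j with rfl | hj
      · simp [Bv_zero] at h0
      · exact no_consecutive_zeros j hj y h3 h0
    rw [Bv_two] at h2; rw [Bv_four] at h4
    have : x ^ 2 - x = -1 / 6 := by linarith
    rw [this] at h4; norm_num at h4
  · exact no_consecutive_zeros m (by omega) y hk hk1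

/-- The arithmetic input for the poles along `H_{3,k}`: a failure forces `b - a = c - b = 1/2`, hence
`c - a = 1`. -/
theorem exists_nonzero_pair (k : ℕ) (a b c : ℝ) (ha : a ∈ Set.Ico (0 : ℝ) 1) (hc : c ∈ Set.Ico (0 : ℝ) 1) :
    ∃ i j, i + j = k ∧ Bv i (b - a) ≠ 0 ∧ Bv j (c - b) ≠ 0 := by
  by_contra hcon
  push Not at hcon
  have h : ∀ i j, i + j = k → Bv i (b - a) = 0 ∨ Bv j (c - b) = 0 := by
    intro i j hij
    by_contra h; push Not at h
    exact h.2 (hcon i j hij h.1)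
  have h1 := half_of_forall k _ _ h
  have h2 := half_of_forall k (c - b) (b - a) (fun i j hij => (h j i (by omega)).symm)
  linarith [ha.1, hc.2]

/-! ### Osgood's lemma and analyticity of series -/

open MeasureTheory Metric Set in
/-- Cauchy's integral formula on a polydisc, for a continuous separately holomorphic function. -/
theorem torus_cauchy (d : ℕ) : ∀ (G : (Fin d → ℂ) → ℂ) (c : Fin d → ℂ) (R : ℝ), 0 < R →
    ContinuousOn G (closedBall c R) →
    (∀ w ∈ closedBall c R, ∀ i, DifferentiableAt ℂ (fun z => G (Function.update w i z)) (w i)) →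
    ∀ z ∈ ball c R, (∯ ζ in T(c, fun _ => R), (∏ i, (ζ i - z i)⁻¹) * G ζ)
      = (2 * Real.pi * Complex.I) ^ d * G z := by
  induction d with
  | zero =>
    intro G c R hR hc hd z hz
    rw [torusIntegral_dim0]
    simp
    congr 1
    exact Subsingleton.elim _ _
  | succ d ih =>
    intro G c R hR hc hd z hz
    have hmem : ∀ θ, torusMap c (fun _ => R) θ ∈ closedBall c R := by
      intro θ
      rw [mem_closedBall, dist_pi_le_iff hR.le]
      intro i
      simp [torusMap, dist_eq_norm, Complex.norm_exp_ofReal_mul_I, abs_of_pos hR]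
    have hne : ∀ θ i, torusMap c (fun _ => R) θ i - z i ≠ 0 := by
      intro θ i h
      rw [mem_ball, dist_pi_lt_iff hR] at hz
      have h1 := hz i
      rw [sub_eq_zero] at h
      rw [← h] at h1
      simp [torusMap, dist_eq_norm, Complex.norm_exp_ofReal_mul_I, abs_of_pos hR] at h1
    have htc : Continuous (torusMap c (fun _ => R)) := by
      unfold torusMap; fun_prop
    have hint : TorusIntegrable (fun ζ => (∏ i, (ζ i - z i)⁻¹) * G ζ) c (fun _ => R) := by
      unfold TorusIntegrable
      refine Continuous.integrableOn_Icc ?_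
      refine Continuous.mul ?_ ?_
      · refine continuous_finsetProd _ fun i _ => ?_
        refine Continuous.inv₀ ?_ (fun θ => hne θ i)
        exact ((continuous_apply i).comp htc).sub continuous_const
      · exact hc.comp_continuous htc hmem
    rw [torusIntegral_succ hint]
    have hz' := hz
    rw [mem_ball, dist_pi_lt_iff hR] at hz'
    have hcons : ∀ x ∈ closedBall (c 0) R, ∀ y ∈ closedBall (c ∘ Fin.succ) R,
        (Fin.cons x y : Fin (d + 1) → ℂ) ∈ closedBall c R := by
      intro x hx y hy
      rw [mem_closedBall, dist_pi_le_iff hR.le] at hy ⊢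
      intro i
      refine Fin.cases ?_ (fun j => ?_) i
      · simpa using hx
      · simpa using hy j
    have hupd : ∀ (x : ℂ) (y : Fin d → ℂ) (i : Fin d) (t : ℂ),
        (Fin.cons x (Function.update y i t) : Fin (d + 1) → ℂ)
          = Function.update (Fin.cons x y : Fin (d + 1) → ℂ) i.succ t := by
      intro x y i t
      exact Fin.cons_update ..
    have hzt : (z ∘ Fin.succ) ∈ ball (c ∘ Fin.succ) R := by
      rw [mem_ball, dist_pi_lt_iff hR]; intro i; exact hz' i.succ
    have hin : ∀ x ∈ sphere (c 0) R,
        (∯ y in T(c ∘ Fin.succ, (fun _ => R) ∘ Fin.succ),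
          (∏ i, ((Fin.cons x y : Fin (d + 1) → ℂ) i - z i)⁻¹) * G (Fin.cons x y))
        = (x - z 0)⁻¹ • ((2 * Real.pi * Complex.I) ^ d * G (Fin.cons x (z ∘ Fin.succ))) := by
      intro x hx
      have hx' := sphere_subset_closedBall hx
      rw [← ih (fun y => G (Fin.cons x y)) (c ∘ Fin.succ) R hR ?_ ?_ _ hzt]
      · rw [smul_eq_mul, ← torusIntegral_const_mul]
        congr 1
        funext y
        rw [Fin.prod_univ_succ]
        simp [mul_assoc]
      · refine hc.comp (Continuous.continuousOn ?_) (fun y hy => hcons x hx' y hy)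
        exact Continuous.finCons continuous_const continuous_id
      · intro w hw i
        have := hd _ (hcons x hx' w hw) i.succ
        simpa [hupd] using this
    rw [circleIntegral.integral_congr hR.le (g := fun x => (x - z 0)⁻¹ • ((2 * Real.pi * Complex.I) ^ d * G (Fin.cons x (z ∘ Fin.succ)))) (fun x hx => hin x hx)]
    have hdx : DifferentiableOn ℂ (fun x => (2 * Real.pi * Complex.I) ^ d * G (Fin.cons x (z ∘ Fin.succ)))
        (closedBall (c 0) R) := by
      intro x hx
      refine DifferentiableAt.differentiableWithinAt ?_
      refine DifferentiableAt.const_mul ?_ _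
      have := hd _ (hcons x hx _ (ball_subset_closedBall hzt)) 0
      simpa using this
    have := (hdx.diffContOnCl_ball Subset.rfl).circleIntegral_sub_inv_smul (w := z 0) (by simpa using hz' 0)
    rw [this, smul_eq_mul, pow_succ]
    have e : (Fin.cons (z 0) (z ∘ Fin.succ) : Fin (d + 1) → ℂ) = z := Fin.cons_self_tail z
    rw [e]; ring

open MeasureTheory Metric Set in
/-- **Osgood's lemma**: a continuous separately holomorphic function is analytic. Cauchy's formula
writes `G z` as a continuous linear functional (integration over the torus of angles `K`) applied to
the Cauchy kernel, which depends analytically on `z` as an element of the Banach algebra `C(K, ℂ)`. -/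
theorem osgood {d : ℕ} (G : (Fin d → ℂ) → ℂ) (c : Fin d → ℂ) (R : ℝ) (hR : 0 < R)
    (hc : ContinuousOn G (closedBall c R))
    (hd : ∀ w ∈ closedBall c R, ∀ i, DifferentiableAt ℂ (fun z => G (Function.update w i z)) (w i)) :
    AnalyticAt ℂ G c := by
  let K : Set (Fin d → ℝ) := Icc 0 fun _ => 2 * Real.pi
  have : CompactSpace K := isCompact_iff_compactSpace.1 isCompact_Icc
  let μ : Measure K := Measure.comap Subtype.val volume
  have : IsFiniteMeasure μ := by
    refine ⟨?_⟩
    rw [Measure.comap_apply _ Subtype.val_injective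
      (fun s hs => (MeasurableEmbedding.subtype_coe measurableSet_Icc).measurableSet_image.2 hs) _ MeasurableSet.univ]
    simp only [image_univ, Subtype.range_coe]
    exact isCompact_Icc.measure_lt_top
  have htc : Continuous (torusMap c (fun _ => R)) := by
    unfold torusMap; fun_prop
  have hmem : ∀ θ, torusMap c (fun _ => R) θ ∈ closedBall c R := by
    intro θ
    rw [mem_closedBall, dist_pi_le_iff hR.le]
    intro i
    simp [torusMap, dist_eq_norm, Complex.norm_exp_ofReal_mul_I, abs_of_pos hR]
  let h : C(K, ℂ) := ⟨fun θ => (∏ i, ((R : ℂ) * Complex.exp (θ.1 i * Complex.I) * Complex.I)) *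
    G (torusMap c (fun _ => R) θ.1), by
      refine Continuous.mul (continuous_finsetProd _ (fun i _ => ?_)) ?_
      · have hi : Continuous fun θ : K => θ.1 i := (continuous_apply i).comp continuous_subtype_val
        exact (continuous_const.mul (Complex.continuous_exp.comp
          ((Complex.continuous_ofReal.comp hi).mul continuous_const))).mul continuous_const
      exact hc.comp_continuous (htc.comp continuous_subtype_val) (fun θ => hmem _)⟩
  let co : Fin d → C(K, ℂ) := fun i => ⟨fun θ => torusMap c (fun _ => R) θ.1 i,
    (continuous_apply i).comp (htc.comp continuous_subtype_val)⟩
  have hintg : ∀ g : C(K, ℂ), Integrable g μ := fun g =>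
    g.continuous.integrable_of_hasCompactSupport (HasCompactSupport.of_compactSpace g)
  let Λ : C(K, ℂ) →L[ℂ] ℂ := LinearMap.mkContinuous
    { toFun := fun g => ∫ θ, g θ ∂μ
      map_add' := fun g₁ g₂ => integral_add (hintg g₁) (hintg g₂)
      map_smul' := fun a g => integral_smul a g } (μ.real univ) (fun g => by
        rw [mul_comm]
        exact norm_integral_le_of_norm_le_const (Filter.Eventually.of_forall g.norm_coe_le_norm))
  -- the Cauchy kernel `∏ i, (ζ i - z i)⁻¹`, as a function of the angle
  let κ : (Fin d → ℂ) → C(K, ℂ) := fun z => ∏ i, Ring.inverse (co i - algebraMap ℂ C(K, ℂ) (z i))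
  have hunit : ∀ z ∈ ball c R, ∀ i, IsUnit (co i - algebraMap ℂ C(K, ℂ) (z i)) := by
    intro z hz i
    rw [ContinuousMap.isUnit_iff_forall_ne_zero]
    intro θ h0
    rw [mem_ball, dist_pi_lt_iff hR] at hz
    have h1 := hz i
    have h2 : torusMap c (fun _ => R) θ.1 i - z i = 0 := h0
    rw [sub_eq_zero] at h2
    rw [← h2] at h1
    simp [torusMap, dist_eq_norm, Complex.norm_exp_ofReal_mul_I, abs_of_pos hR] at h1
  have hκ : AnalyticAt ℂ κ c := by
    have : ∀ i, AnalyticAt ℂ (fun z : Fin d → ℂ => Ring.inverse (co i - algebraMap ℂ C(K, ℂ) (z i))) c := by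
      intro i
      have h1 : AnalyticAt ℂ (fun z : Fin d → ℂ => co i - algebraMap ℂ C(K, ℂ) (z i)) c := by
        refine analyticAt_const.sub ?_
        exact ((algebraMapCLM ℂ C(K, ℂ)).comp (ContinuousLinearMap.proj (R := ℂ) (φ := fun _ : Fin d => ℂ) i)).analyticAt c
      obtain ⟨u, hu⟩ := hunit c (mem_ball_self hR) i
      have h2 := analyticAt_inverse (𝕜 := ℂ) u
      rw [hu] at h2
      exact AnalyticAt.fun_comp (g := Ring.inverse)
        (f := fun z : Fin d → ℂ => co i - algebraMap ℂ C(K, ℂ) (z i)) h2 h1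
    exact Finset.analyticAt_fun_prod _ (fun i _ => this i)
  have hA : AnalyticAt ℂ (fun z => ((2 * Real.pi * Complex.I) ^ d)⁻¹ * Λ (κ z * h)) c := by
    refine analyticAt_const.mul ?_
    exact (Λ.analyticAt _).fun_comp (hκ.mul analyticAt_const)
  refine hA.congr ?_
  filter_upwards [isOpen_ball.mem_nhds (mem_ball_self hR)] with z hz
  have h1 := torus_cauchy d G c R hR hc hd z hz
  have h0 : ((2 * Real.pi * Complex.I) ^ d : ℂ) ≠ 0 := pow_ne_zero _ Complex.two_pi_I_ne_zero
  rw [inv_mul_eq_iff_eq_mul₀ h0, ← h1, torusIntegral]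
  have h2 : Λ (κ z * h) = ∫ θ : K, (κ z * h) θ ∂μ := rfl
  rw [h2, ← integral_subtype_comap measurableSet_Icc]
  refine integral_congr_ae (Filter.Eventually.of_forall fun θ => ?_)
  have h3 : κ z θ = ∏ i, (torusMap c (fun _ => R) θ.1 i - z i)⁻¹ := by
    simp only [κ, ContinuousMap.coe_prod, Finset.prod_apply]
    refine Finset.prod_congr rfl fun i _ => ?_
    have h4 := congrArg (fun g : C(K, ℂ) => g θ) (Ring.mul_inverse_cancel _ (hunit z hz i))
    exact eq_inv_of_mul_eq_one_right h4
  simp only [ContinuousMap.mul_apply, h3, smul_eq_mul]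
  simp only [h, ContinuousMap.coe_mk]
  ring

open Filter Topology Metric in
/-- A locally normally convergent series of analytic functions of several variables is analytic. -/
theorem analyticOnNhd_tsum {d : ℕ} {U : Set (Fin d → ℂ)} (f : ℕ → (Fin d → ℂ) → ℂ)
    (hf : ∀ n, AnalyticOnNhd ℂ (f n) U) (hU : IsOpen U)
    (hb : ∀ p ∈ U, ∃ V ∈ 𝓝 p, ∃ u : ℕ → ℝ, Summable u ∧ ∀ n, ∀ w ∈ V, ‖f n w‖ ≤ u n) :
    AnalyticOnNhd ℂ (fun w => ∑' n, f n w) U := by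
  intro p hp
  obtain ⟨V, hV, u, hu, hle⟩ := hb p hp
  obtain ⟨R, hR, hsub⟩ := Metric.mem_nhds_iff.1 (inter_mem hV (hU.mem_nhds hp))
  have hsub2 : closedBall p (R / 2) ⊆ ball p R := closedBall_subset_ball (by linarith)
  refine osgood _ p (R / 2) (by positivity) ?_ ?_
  · refine continuousOn_tsum (fun n => ?_) hu (fun n w hw => hle n w (hsub (hsub2 hw)).1)
    exact fun w hw => ((hf n w (hsub (hsub2 hw)).2).continuousAt).continuousWithinAt
  · intro w hw i
    have hcu : Continuous (fun z : ℂ => Function.update w i z) :=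
      continuous_const.update i continuous_id
    have hopen : IsOpen ((fun z => Function.update w i z) ⁻¹' ball p R) :=
      isOpen_ball.preimage hcu
    have hwm : w i ∈ ((fun z => Function.update w i z) ⁻¹' ball p R) := by
      simpa using hsub2 hw
    have := Complex.differentiableOn_tsum_of_summable_norm (F := fun n z => f n (Function.update w i z)) hu
      (fun n z hz => ?_) hopen (fun n z hz => hle n _ (hsub hz).1)
    · exact this.differentiableAt (hopen.mem_nhds hwm)
    · refine DifferentiableAt.differentiableWithinAt ?_
      have h1 := (hf n _ (hsub hz).2).differentiableAt
      exact h1.comp z (differentiableAt_pi.2 (fun j => by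
        rcases eq_or_ne j i with rfl | hj
        · simp
        · simp [Function.update_of_ne hj]))

/-! ### Pochhammer polynomials and the binomial remainder -/

/-- The rising factorial `(w)_k = w (w+1) ⋯ (w+k-1)`. -/
noncomputable def ph (w : ℂ) (k : ℕ) : ℂ := ∏ j ∈ Finset.range k, (w + j)

theorem ph_zero (w : ℂ) : ph w 0 = 1 := by simp [ph]

theorem ph_succ' (w : ℂ) (k : ℕ) : ph w (k + 1) = w * ph (w + 1) k := by
  simp only [ph]
  rw [Finset.prod_range_succ', mul_comm]
  congr 1
  · simp
  · refine Finset.prod_congr rfl fun j _ => ?_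
    push_cast; ring

theorem ph_add (w : ℂ) (k j : ℕ) : ph w k * ph (w + k) j = ph w (k + j) := by
  simp only [ph]
  rw [Finset.prod_range_add]
  congr 1
  refine Finset.prod_congr rfl fun j _ => ?_
  push_cast; ring

theorem norm_ph_le {M : ℝ} {w : ℂ} (hw : ‖w‖ ≤ M) (k : ℕ) :
    ‖ph w k‖ ≤ ∏ j ∈ Finset.range k, (M + j) := by
  simp only [ph, norm_prod]
  refine Finset.prod_le_prod (fun _ _ => norm_nonneg _) fun j _ => ?_
  refine (norm_add_le _ _).trans ?_
  simpa using hw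

/-- The coefficients `γ_k(w) = B_k(b) (w)_k / k!` of the Euler–Maclaurin type expansion of
`w (n + α₁)^{-w-1}` in the differences of `(n + α₂)^{-w-k}`, where `b = α₂ - α₁`. -/
noncomputable def gam (b : ℝ) (k : ℕ) (w : ℂ) : ℂ := (Bv k b : ℂ) * ph w k / (k.factorial : ℂ)

theorem gam_zero (b : ℝ) (w : ℂ) : gam b 0 w = 1 := by simp [gam, ph, Bv_zero]

theorem gam_succ_zero (b : ℝ) (k : ℕ) : gam b (k + 1) 0 = 0 := by simp [gam, ph_succ']

theorem rpowC_zero (b : ℝ) : rpowC b 0 = 1 := by simp [rpowC]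

theorem rpowC_one (z : ℂ) : rpowC 1 z = 1 := by simp [rpowC]

theorem rpowC_add (b : ℝ) (z z' : ℂ) : rpowC b (z + z') = rpowC b z * rpowC b z' := by
  simp only [rpowC, ← Complex.exp_add]; ring_nf

theorem rpowC_mul {a b : ℝ} (ha : 0 < a) (hb : 0 < b) (z : ℂ) :
    rpowC (a * b) z = rpowC a z * rpowC b z := by
  simp only [rpowC, ← Complex.exp_add, Real.log_mul ha.ne' hb.ne']
  push_cast; ring_nf

theorem norm_rpowC {b : ℝ} (hb : 0 < b) (z : ℂ) : ‖rpowC b z‖ = b ^ z.re := by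
  rw [rpowC, Complex.norm_exp, Real.rpow_def_of_pos hb]
  congr 1
  simp [mul_comm]

theorem rpowC_neg_nat {b : ℝ} (hb : 0 < b) (k : ℕ) : rpowC b (-(k : ℂ)) = ((b : ℂ)⁻¹) ^ k := by
  rw [rpowC, neg_mul, Complex.exp_neg, Complex.exp_nat_mul, ← Complex.ofReal_exp,
    Real.exp_log hb, inv_pow]

theorem rpowC_neg_one {b : ℝ} (hb : 0 < b) : rpowC b (-1) = (b : ℂ)⁻¹ := by
  simpa using rpowC_neg_nat hb 1

theorem rpowC_ofReal {b : ℝ} (hb : 0 < b) (x : ℝ) : rpowC b (x : ℂ) = ((b ^ x : ℝ) : ℂ) := by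
  rw [rpowC, Real.rpow_def_of_pos hb]; push_cast; ring_nf

theorem rpowC_ne_zero (b : ℝ) (z : ℂ) : rpowC b z ≠ 0 := Complex.exp_ne_zero _

theorem binom_deriv (x : ℂ) {u : ℝ} (hu : u < 1) :
    HasDerivAt (fun u : ℝ => rpowC (1 - u) (-x)) (x * rpowC (1 - u) (-(x + 1))) u := by
  have hpos : 0 < 1 - u := by linarith
  have h1 : HasDerivAt (fun u : ℝ => Real.log (1 - u)) (-1 / (1 - u)) u :=
    ((hasDerivAt_id u).const_sub 1).log hpos.ne'
  have h2 := ((h1.ofReal_comp).const_mul (-x)).cexp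
  refine h2.congr_deriv ?_
  rw [show -(x + 1) = -x + -1 by ring, rpowC_add, rpowC_neg_one hpos]
  simp only [rpowC]
  push_cast
  have : (1 - (u : ℂ)) ≠ 0 := by exact_mod_cast hpos.ne'
  field_simp

theorem binom_deriv_poly (x : ℂ) (J : ℕ) (u : ℝ) :
    HasDerivAt (fun u : ℝ => ∑ j ∈ Finset.range (J + 1), ph x j / (j.factorial : ℂ) * (u : ℂ) ^ j)
      (x * ∑ j ∈ Finset.range J, ph (x + 1) j / (j.factorial : ℂ) * (u : ℂ) ^ j) u := by
  have h := HasDerivAt.fun_sum (u := Finset.range (J + 1))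
    (A := fun j (u : ℝ) => ph x j / (j.factorial : ℂ) * (u : ℂ) ^ j)
    (A' := fun j => ph x j / (j.factorial : ℂ) * (j * (u : ℂ) ^ (j - 1) * 1)) (x := u)
    (fun j _ => (((hasDerivAt_id u).ofReal_comp).pow j).const_mul _)
  refine h.congr_deriv ?_
  rw [Finset.sum_range_succ', Finset.mul_sum]
  simp only [Nat.cast_zero, zero_mul, mul_zero, add_zero]
  refine Finset.sum_congr rfl fun j _ => ?_
  rw [ph_succ', Nat.factorial_succ, Nat.add_sub_cancel]
  have h1 : (j.factorial : ℂ) ≠ 0 := by exact_mod_cast j.factorial_ne_zero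
  have h2 : ((j : ℂ) + 1) ≠ 0 := by exact_mod_cast j.succ_ne_zero
  push_cast
  field_simp

/-- Taylor's theorem for `(1 - u)^{-x}`, uniformly for `x` in a disc. -/
theorem binom_rem (J : ℕ) : ∀ M : ℝ, ∃ C : ℝ, 0 ≤ C ∧ ∀ x : ℂ, ‖x‖ ≤ M → ∀ u : ℝ, |u| ≤ 1 / 2 →
    ‖rpowC (1 - u) (-x) - ∑ j ∈ Finset.range J, ph x j / (j.factorial : ℂ) * (u : ℂ) ^ j‖
      ≤ C * |u| ^ J := by
  induction J with
  | zero =>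
    intro M
    refine ⟨Real.exp (M * Real.log 2), (Real.exp_pos _).le, fun x hx u hu => ?_⟩
    obtain ⟨h1, h2⟩ := abs_le.1 hu
    simp only [Finset.range_zero, Finset.sum_empty, sub_zero, pow_zero, mul_one, rpowC]
    refine (Complex.norm_exp_le_exp_norm _).trans (Real.exp_le_exp.2 ?_)
    rw [norm_mul, norm_neg, Complex.norm_real, Real.norm_eq_abs]
    have h0 : (0 : ℝ) ≤ M := (norm_nonneg x).trans hx
    refine mul_le_mul hx ?_ (abs_nonneg _) h0
    rw [abs_le]
    refine ⟨?_, Real.log_le_log (by linarith) (by linarith)⟩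
    rw [← Real.log_inv]
    exact Real.log_le_log (by norm_num) (by norm_num; linarith)
  | succ J ih =>
    intro M
    obtain ⟨C, hC, h⟩ := ih (M + 1)
    refine ⟨|M| * C, by positivity, fun x hx u hu => ?_⟩
    have hx1 : ‖x + 1‖ ≤ M + 1 := (norm_add_le _ _).trans (by simpa using hx)
    have hseg : ∀ v ∈ Set.uIcc 0 u, |v| ≤ |u| := by
      intro v hv
      simpa using Set.abs_sub_left_of_mem_uIcc hv
    have key := Convex.norm_image_sub_le_of_norm_hasDerivWithin_le (𝕜 := ℝ)
      (f := fun u : ℝ => rpowC (1 - u) (-x) -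
        ∑ j ∈ Finset.range (J + 1), ph x j / (j.factorial : ℂ) * (u : ℂ) ^ j)
      (f' := fun u : ℝ => x * rpowC (1 - u) (-(x + 1)) -
        x * ∑ j ∈ Finset.range J, ph (x + 1) j / (j.factorial : ℂ) * (u : ℂ) ^ j)
      (s := Set.uIcc 0 u) (x := 0) (y := u) (C := |M| * C * |u| ^ J)
      (fun v hv => ((binom_deriv x (by
        have := hseg v hv
        have := le_abs_self v
        linarith)).sub (binom_deriv_poly x J v)).hasDerivWithinAt)
      (fun v hv => by
        rw [← mul_sub, norm_mul, mul_assoc]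
        refine mul_le_mul (hx.trans (le_abs_self M)) ?_ (norm_nonneg _) (abs_nonneg _)
        refine (h (x + 1) hx1 v ((hseg v hv).trans hu)).trans ?_
        exact mul_le_mul_of_nonneg_left (pow_le_pow_left₀ (abs_nonneg _) (hseg v hv) J) hC)
      (convex_uIcc 0 u) Set.left_mem_uIcc Set.right_mem_uIcc
    have h0 : ∑ j ∈ Finset.range (J + 1), ph x j / (j.factorial : ℂ) * ((0 : ℝ) : ℂ) ^ j = 1 := by
      rw [Finset.sum_range_succ']
      simp [ph_zero]
    simp only [h0] at key
    simp only [sub_zero, rpowC_one, sub_self, Real.norm_eq_abs] at key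
    rw [pow_succ, ← mul_assoc]
    exact key

/-- The recursion of the Bernoulli polynomials. -/
theorem bern_conv (b : ℝ) (m : ℕ) :
    ∑ k ∈ Finset.range (m + 1), ((m + 1).choose k : ℝ) * Bv k b = (m + 1) * b ^ m := by
  have h := congrArg (fun p => (Polynomial.aeval b p : ℝ)) (Polynomial.sum_bernoulli m)
  simp only [map_sum, map_smul, Polynomial.aeval_monomial] at h
  simpa [Bv, Algebra.smul_def] using h

/-- The recursion `bern_conv` in the form of an identity between Taylor coefficients: with `t = 1 / y`
and the factor `y ^ (-w)` removed, both sides are the coefficient of `t ^ (m + 1)` in the two sides of the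
expansion defining `eK`. -/
theorem coeff_identity (b : ℝ) (w : ℂ) (m : ℕ) :
    ∑ k ∈ Finset.range (m + 1), gam b k w *
      (ph (w + k) (m - k + 1) / ((m - k + 1).factorial : ℂ))
      = w * (ph (w + 1) m / (m.factorial : ℂ) * (b : ℂ) ^ m) := by
  have hm : ((m + 1).factorial : ℂ) ≠ 0 := by exact_mod_cast (m + 1).factorial_ne_zero
  have hm' : (m.factorial : ℂ) ≠ 0 := by exact_mod_cast m.factorial_ne_zero
  have h1 : ∀ k ∈ Finset.range (m + 1), gam b k w *
      (ph (w + k) (m - k + 1) / ((m - k + 1).factorial : ℂ))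
      = ph w (m + 1) / ((m + 1).factorial : ℂ) * (((m + 1).choose k : ℂ) * (Bv k b : ℂ)) := by
    intro k hk
    have hk : k ≤ m := Nat.lt_succ_iff.1 (Finset.mem_range.1 hk)
    have e : m + 1 = k + (m - k + 1) := by omega
    have hc := Nat.choose_mul_factorial_mul_factorial (show k ≤ m + 1 by omega)
    rw [show m + 1 - k = m - k + 1 by omega] at hc
    have h3 : (k.factorial : ℂ) ≠ 0 := by exact_mod_cast k.factorial_ne_zero
    have h4 : ((m - k + 1).factorial : ℂ) ≠ 0 := by
      exact_mod_cast (m - k + 1).factorial_ne_zero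
    have hp := ph_add w k (m - k + 1)
    rw [← e] at hp
    rw [gam, ← hp]
    have hc' : ((m + 1).choose k : ℂ) * (k.factorial : ℂ) * ((m - k + 1).factorial : ℂ)
      = ((m + 1).factorial : ℂ) := by exact_mod_cast hc
    rw [← hc']
    have h5 : ((m + 1).choose k : ℂ) ≠ 0 := by
      intro h0; rw [h0] at hc'; simp at hc'; exact hm hc'.symm
    field_simp
  rw [Finset.sum_congr rfl h1, ← Finset.mul_sum]
  have h2 := congrArg (fun x : ℝ => (x : ℂ)) (bern_conv b m)
  push_cast at h2
  rw [h2, ph_succ', Nat.factorial_succ]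
  have h6 : ((m : ℂ) + 1) ≠ 0 := by exact_mod_cast m.succ_ne_zero
  push_cast
  field_simp

/-- The remainder after `K` terms in the expansion of `w (y - b)^{-w-1}` in the differences
`(y - 1)^{-w-k} - y^{-w-k}`. -/
noncomputable def eK (K : ℕ) (b y : ℝ) (w : ℂ) : ℂ :=
  w * rpowC (y - b) (-(w + 1)) -
    ∑ k ∈ Finset.range K, gam b k w * (rpowC (y - 1) (-(w + k)) - rpowC y (-(w + k)))

/-- The Taylor polynomials of the two sides of the expansion agree, so only remainders enter `eK`. -/
theorem taylor_match (K : ℕ) (b t : ℝ) (w : ℂ) :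
    w * t * ∑ j ∈ Finset.range K, ph (w + 1) j / (j.factorial : ℂ) * ((b * t : ℝ) : ℂ) ^ j
    = ∑ k ∈ Finset.range K, gam b k w * (t : ℂ) ^ k *
      ∑ j ∈ Finset.range (K - k), ph (w + k) (j + 1) / ((j + 1).factorial : ℂ) * (t : ℂ) ^ (j + 1)
    := by
  simp_rw [Finset.mul_sum]
  rw [← Finset.sum_range_diag_flip K (fun k j => gam b k w * (t : ℂ) ^ k *
    (ph (w + k) (j + 1) / ((j + 1).factorial : ℂ) * (t : ℂ) ^ (j + 1)))]
  refine Finset.sum_congr rfl fun m _ => ?_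
  have h := coeff_identity b w m
  have : w * t * (ph (w + 1) m / (m.factorial : ℂ) * ((b * t : ℝ) : ℂ) ^ m)
    = (w * (ph (w + 1) m / (m.factorial : ℂ) * (b : ℂ) ^ m)) * (t : ℂ) ^ (m + 1) := by
    push_cast; ring
  rw [this, ← h, Finset.sum_mul]
  refine Finset.sum_congr rfl fun k hk => ?_
  have hk : k ≤ m := Nat.lt_succ_iff.1 (Finset.mem_range.1 hk)
  have e : (t : ℂ) ^ (m + 1) = (t : ℂ) ^ k * (t : ℂ) ^ (m - k + 1) := by
    rw [← pow_add]; congr 1; omega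
  rw [e]; ring

/-- The power `y ^ (-w)` taken out, the remainder is a function of the small quantity `1 / y`. -/
theorem eK_factor (K : ℕ) {b y : ℝ} (hb : |b| ≤ 1) (hy : 2 ≤ y) (w : ℂ) :
    eK K b y w = rpowC y (-w) * (w * (y⁻¹ : ℝ) * rpowC (1 - b * y⁻¹) (-(w + 1)) -
      ∑ k ∈ Finset.range K, gam b k w * ((y⁻¹ : ℝ) : ℂ) ^ k *
        (rpowC (1 - y⁻¹) (-(w + k)) - 1)) := by
  have hy0 : 0 < y := by linarith
  obtain ⟨hb1, hb2⟩ := abs_le.1 hb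
  have hi : y⁻¹ ≤ 1 / 2 := by
    rw [inv_le_comm₀ hy0 (by norm_num)]; simpa using hy
  have hi0 : 0 < y⁻¹ := inv_pos.2 hy0
  have e1 : y - b = y * (1 - b * y⁻¹) := by field_simp
  have e2 : y - 1 = y * (1 - y⁻¹) := by field_simp
  have p1 : 0 < 1 - b * y⁻¹ := by nlinarith
  have p2 : 0 < 1 - y⁻¹ := by linarith
  rw [eK, e1, e2, rpowC_mul hy0 p1, mul_sub (rpowC y (-w)), Finset.mul_sum]
  congr 1
  · rw [show -(w + 1) = -w + -1 by ring, rpowC_add y, rpowC_neg_one hy0]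
    push_cast; ring
  · refine Finset.sum_congr rfl fun k _ => ?_
    rw [rpowC_mul hy0 p2, show -(w + (k : ℂ)) = -w + -(k : ℂ) by ring, rpowC_add y,
      rpowC_neg_nat hy0]
    push_cast; ring

/-- The remainder decays like `y^{-Re w - K - 1}`, locally uniformly in `w`. -/
theorem eK_bound (K : ℕ) {b : ℝ} (hb : |b| ≤ 1) (M : ℝ) :
    ∃ C : ℝ, 0 ≤ C ∧ ∀ w : ℂ, ‖w‖ ≤ M → ∀ y : ℝ, 2 ≤ y →
      ‖eK K b y w‖ ≤ C * y ^ (-w.re - (K + 1)) := by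
  obtain ⟨C1, hC1, h1⟩ := binom_rem K (M + 1)
  have h2 : ∀ k : ℕ, ∃ C : ℝ, 0 ≤ C ∧ ∀ x : ℂ, ‖x‖ ≤ M + k → ∀ u : ℝ, |u| ≤ 1 / 2 →
    ‖rpowC (1 - u) (-x) - ∑ j ∈ Finset.range (K + 1 - k),
      ph x j / (j.factorial : ℂ) * (u : ℂ) ^ j‖ ≤ C * |u| ^ (K + 1 - k) :=
    fun k => binom_rem (K + 1 - k) (M + k)
  choose C2 hC2 h2 using h2
  let g : ℕ → ℝ := fun k => |Bv k b| * ∏ j ∈ Finset.range k, (|M| + j)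
  have hg0 : ∀ k, 0 ≤ g k := fun k => by positivity
  have hg : ∀ w : ℂ, ‖w‖ ≤ M → ∀ k, ‖gam b k w‖ ≤ g k := by
    intro w hw k
    rw [gam, norm_div, norm_mul, Complex.norm_real, Complex.norm_natCast, Real.norm_eq_abs]
    refine (div_le_self (by positivity) ?_).trans ?_
    · exact_mod_cast Nat.succ_le_of_lt k.factorial_pos
    · exact mul_le_mul_of_nonneg_left (norm_ph_le (hw.trans (le_abs_self M)) k) (abs_nonneg _)
  refine ⟨|M| * C1 + ∑ k ∈ Finset.range K, g k * C2 k,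
    add_nonneg (by positivity) (Finset.sum_nonneg fun k _ => mul_nonneg (hg0 k) (hC2 k)),
    fun w hw y hy => ?_⟩
  have hy0 : 0 < y := by linarith
  have hi : y⁻¹ ≤ 1 / 2 := by
    rw [inv_le_comm₀ hy0 (by norm_num)]; simpa using hy
  have hi0 : 0 < y⁻¹ := inv_pos.2 hy0
  set t := y⁻¹ with ht
  have hbt : |b * t| ≤ t := by
    rw [abs_mul, abs_of_pos hi0]; nlinarith
  have hpow : y ^ (-w.re - (K + 1 : ℝ)) = y ^ (-w.re) * t ^ (K + 1) := by
    rw [Real.rpow_sub hy0, ← Nat.cast_succ, Real.rpow_natCast, div_eq_mul_inv, ← inv_pow]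
  rw [eK_factor K hb hy, norm_mul, norm_rpowC hy0, hpow, Complex.neg_re, mul_left_comm]
  refine mul_le_mul_of_nonneg_left ?_ (Real.rpow_nonneg hy0.le _)
  have hsplit : w * t * rpowC (1 - b * t) (-(w + 1)) -
      ∑ k ∈ Finset.range K, gam b k w * (t : ℂ) ^ k * (rpowC (1 - t) (-(w + k)) - 1)
      = w * t * (rpowC (1 - b * t) (-(w + 1)) -
        ∑ j ∈ Finset.range K, ph (w + 1) j / (j.factorial : ℂ) * ((b * t : ℝ) : ℂ) ^ j)
      - ∑ k ∈ Finset.range K, gam b k w * (t : ℂ) ^ k * (rpowC (1 - t) (-(w + k)) -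
        ∑ j ∈ Finset.range (K + 1 - k), ph (w + k) j / (j.factorial : ℂ) * (t : ℂ) ^ j) := by
    have h3 : ∀ k ∈ Finset.range K, gam b k w * (t : ℂ) ^ k * (rpowC (1 - t) (-(w + k)) -
        ∑ j ∈ Finset.range (K + 1 - k), ph (w + k) j / (j.factorial : ℂ) * (t : ℂ) ^ j)
        = gam b k w * (t : ℂ) ^ k * (rpowC (1 - t) (-(w + k)) - 1) - gam b k w * (t : ℂ) ^ k *
        ∑ j ∈ Finset.range (K - k),
          ph (w + k) (j + 1) / ((j + 1).factorial : ℂ) * (t : ℂ) ^ (j + 1) := by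
      intro k hk
      have hk := Finset.mem_range.1 hk
      rw [show K + 1 - k = (K - k) + 1 by omega, Finset.sum_range_succ', ph_zero]
      simp only [Nat.factorial_zero, Nat.cast_one, pow_zero, div_one, mul_one]
      ring
    rw [Finset.sum_congr rfl h3, Finset.sum_sub_distrib, ← taylor_match]
    ring
  rw [hsplit]
  refine (norm_sub_le _ _).trans ?_
  rw [add_mul]
  refine add_le_add ?_ ?_
  · have hw1 : ‖w + 1‖ ≤ M + 1 := (norm_add_le _ _).trans (by simpa using hw)
    have := h1 (w + 1) hw1 (b * t) (hbt.trans hi)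
    rw [norm_mul, norm_mul, Complex.norm_real, Real.norm_eq_abs, abs_of_pos hi0]
    calc _ ≤ |M| * t * (C1 * |b * t| ^ K) := by
          refine mul_le_mul ?_ this (norm_nonneg _) (by positivity)
          exact mul_le_mul_of_nonneg_right (hw.trans (le_abs_self M)) hi0.le
      _ ≤ |M| * t * (C1 * t ^ K) := by gcongr
      _ = _ := by rw [pow_succ]; ring
  · refine (norm_sum_le _ _).trans ?_
    rw [Finset.sum_mul]
    refine Finset.sum_le_sum fun k hk => ?_
    have hk := Finset.mem_range.1 hk
    have hwk : ‖w + k‖ ≤ M + k := (norm_add_le _ _).trans (by simpa using hw)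
    have := h2 k (w + k) hwk t (by rwa [abs_of_pos hi0])
    rw [abs_of_pos hi0] at this
    rw [norm_mul, norm_mul, norm_pow, Complex.norm_real, Real.norm_eq_abs, abs_of_pos hi0]
    calc _ ≤ g k * t ^ k * (C2 k * t ^ (K + 1 - k)) := by
          refine mul_le_mul ?_ this (norm_nonneg _) (mul_nonneg (hg0 k) (by positivity))
          exact mul_le_mul_of_nonneg_right (hg w hw k) (by positivity)
      _ = g k * C2 k * (t ^ k * t ^ (K + 1 - k)) := by ring
      _ = _ := by rw [← pow_add]; congr 2; omega

/-! ### Iterated sums and the functional equation -/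

/-- A bound for power sums that is uniform in the exponent `a ≥ δ`; the constant blows up as `δ` tends
to `0`. -/
theorem sum_rpow_le {a δ : ℝ} (hδ : 0 < δ) (hδ1 : δ ≤ 1) (ha : δ ≤ a) (n : ℕ) :
    ∑ m ∈ Finset.Ico 1 n, (m : ℝ) ^ (a - 1) ≤ δ⁻¹ * (n : ℝ) ^ a := by
  have hδi : 1 ≤ δ⁻¹ := (one_le_inv₀ hδ).2 hδ1
  rcases le_or_gt 1 a with h1 | h1
  · calc _ ≤ ∑ m ∈ Finset.Ico 1 n, (n : ℝ) ^ (a - 1) := by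
          refine Finset.sum_le_sum fun m hm => ?_
          have := (Finset.mem_Ico.1 hm).2.le
          exact Real.rpow_le_rpow (by positivity) (by exact_mod_cast this) (by linarith)
      _ ≤ n * (n : ℝ) ^ (a - 1) := by
          rw [Finset.sum_const, nsmul_eq_mul, Nat.card_Ico]
          refine mul_le_mul_of_nonneg_right ?_ (by positivity)
          exact_mod_cast Nat.sub_le _ _
      _ ≤ (n : ℝ) ^ a := by
          rcases Nat.eq_zero_or_pos n with rfl | hn
          · simp; positivity
          · have hn : (0 : ℝ) < n := by exact_mod_cast hn
            rw [Real.rpow_sub_one hn.ne']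
            field_simp; rfl
      _ ≤ _ := le_mul_of_one_le_left (by positivity) hδi
  · have ha0 : 0 < a := hδ.trans_le ha
    have key : ∀ n : ℕ, ∑ m ∈ Finset.Ico 1 (n + 1), (m : ℝ) ^ (a - 1) ≤ a⁻¹ * (n : ℝ) ^ a := by
      intro n
      induction n with
      | zero => simp [Real.zero_rpow ha0.ne']
      | succ n ih =>
        rw [Finset.sum_Ico_succ_top (by omega)]
        have hn : (0 : ℝ) < (n + 1 : ℕ) := by positivity
        have hb := rpow_one_add_le_one_add_mul_self (s := -((n + 1 : ℕ) : ℝ)⁻¹) (p := a)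
          (by
            have : ((n + 1 : ℕ) : ℝ)⁻¹ ≤ 1 := by
              apply inv_le_one_of_one_le₀; exact_mod_cast Nat.le_add_left 1 n
            linarith) ha0.le h1.le
        have e : (n : ℝ) ^ a = ((n + 1 : ℕ) : ℝ) ^ a * (1 + -((n + 1 : ℕ) : ℝ)⁻¹) ^ a := by
          rw [← Real.mul_rpow hn.le]
          · congr 1
            field_simp
            push_cast; ring
          · have : ((n + 1 : ℕ) : ℝ)⁻¹ ≤ 1 := by
              apply inv_le_one_of_one_le₀; exact_mod_cast Nat.le_add_left 1 n
            linarith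
        rw [e] at ih
        have h2 : ((n + 1 : ℕ) : ℝ) ^ a * (1 + -((n + 1 : ℕ) : ℝ)⁻¹) ^ a ≤
          ((n + 1 : ℕ) : ℝ) ^ a * (1 + a * -((n + 1 : ℕ) : ℝ)⁻¹) :=
          mul_le_mul_of_nonneg_left hb (by positivity)
        have h3 := mul_le_mul_of_nonneg_left h2 (inv_pos.2 ha0).le
        refine (add_le_add (ih.trans h3) le_rfl).trans (le_of_eq ?_)
        rw [Real.rpow_sub_one hn.ne']
        field_simp
        ring
    rcases Nat.eq_zero_or_pos n with rfl | hn
    · simp; positivity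
    · obtain ⟨n, rfl⟩ : ∃ m, n = m + 1 := ⟨n - 1, by omega⟩
      refine (key n).trans ?_
      have : (n : ℝ) ^ a ≤ ((n + 1 : ℕ) : ℝ) ^ a :=
        Real.rpow_le_rpow (by positivity) (by push_cast; linarith) ha0.le
      refine mul_le_mul ?_ this (by positivity) (by positivity)
      exact inv_anti₀ hδ ha

/-- Powers of `m + α`, with `0 ≤ α < 1 ≤ m`, are comparable to powers of `m`, uniformly in bounded exponents. -/
theorem rpow_comparable {m y : ℝ} (hm : 0 < m) (h1 : m ≤ y) (h2 : y ≤ 2 * m) {x X : ℝ}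
    (hx : |x| ≤ X) : y ^ x ≤ 2 ^ X * m ^ x := by
  have h2X : (1 : ℝ) ≤ 2 ^ X := Real.one_le_rpow (by norm_num) ((abs_nonneg x).trans hx)
  rcases le_total 0 x with h | h
  · calc y ^ x ≤ (2 * m) ^ x := Real.rpow_le_rpow (hm.le.trans h1) h2 h
      _ = 2 ^ x * m ^ x := Real.mul_rpow (by norm_num) hm.le
      _ ≤ _ := by
        refine mul_le_mul_of_nonneg_right ?_ (by positivity)
        exact Real.rpow_le_rpow_of_exponent_le (by norm_num) ((le_abs_self x).trans hx)
  · calc y ^ x ≤ m ^ x := Real.rpow_le_rpow_of_nonpos hm h1 h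
      _ ≤ _ := le_mul_of_one_le_left (by positivity) h2X

/-- The truncated inner sum over `n > m_1 > ⋯ > m_d > 0`, in the coordinates `w` adapted to the
partial sums of the arguments: the exponent attached to `m_1` is `w 0 - c + 1`, and the exponent
attached to `m_{j+1}` is `w j - w (j-1) + 1`. -/
noncomputable def Hw : (d : ℕ) → (Fin d → ℝ) → ℂ → (Fin d → ℂ) → ℕ → ℂ
  | 0, _, _, _, _ => 1
  | d + 1, al, c, w, n => ∑ m ∈ Finset.Ico 1 n,
      rpowC ((m : ℝ) + al 0) (-(w 0 - c + 1)) * Hw d (Fin.tail al) (w 0) (Fin.tail w) m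

/-- The contribution of the outermost index `n` to the multiple Hurwitz zeta function of depth
`d + 1`, in the coordinates `w`. -/
noncomputable def zt {d : ℕ} (al : Fin (d + 1) → ℝ) (w : Fin (d + 1) → ℂ) (n : ℕ) : ℂ :=
  rpowC ((n : ℝ) + al 0) (-(w 0 + 1)) * Hw d (Fin.tail al) (w 0) (Fin.tail w) n

/-- The multiple Hurwitz zeta function of depth `d + 1` in the coordinates
`w i = s 0 + ⋯ + s i - (i + 1)`, as an iterated sum. -/
noncomputable def Zw {d : ℕ} (al : Fin (d + 1) → ℝ) (w : Fin (d + 1) → ℂ) : ℂ :=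
  ∑' n : ℕ, zt al w (n + 1)

/-- Only the differences of `c, w 0, w 1, …` matter, so a common shift has no effect. -/
theorem Hw_shift (d : ℕ) : ∀ (al : Fin d → ℝ) (c : ℂ) (w : Fin d → ℂ) (k : ℂ) (n : ℕ),
    Hw d al (c + k) (fun i => w i + k) n = Hw d al c w n := by
  induction d with
  | zero => intros; rfl
  | succ d ih =>
    intro al c w k n
    simp only [Hw]
    refine Finset.sum_congr rfl fun m _ => ?_
    have h1 : w 0 + k - (c + k) + 1 = w 0 - c + 1 := by ring
    have h2 : Fin.tail (fun i => w i + k) = fun i => Fin.tail w i + k := rfl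
    rw [h1, h2, ih]

theorem Hw_one (d : ℕ) (al : Fin (d + 1) → ℝ) (c : ℂ) (w : Fin (d + 1) → ℂ) :
    Hw (d + 1) al c w 1 = 0 := by simp [Hw]

/-- The increment of the inner sum is one term of the next shorter inner sum; multiplied by the
power of `n + al 0` of exponent `-(c + k)`, it becomes a term of the zeta series of lower depth at `w + k`. -/
theorem Hw_diff (d : ℕ) (al : Fin (d + 1) → ℝ) (c : ℂ) (w : Fin (d + 1) → ℂ) (n : ℕ)
    (hn : 1 ≤ n) (k : ℕ) :
    rpowC ((n : ℝ) + al 0) (-(c + k)) * (Hw (d + 1) al c w (n + 1) - Hw (d + 1) al c w n)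
      = zt al (fun i => w i + k) n := by
  simp only [Hw]
  rw [Finset.sum_Ico_succ_top hn, add_sub_cancel_left, ← mul_assoc, ← rpowC_add, zt]
  have h2 : Fin.tail (fun i => w i + (k : ℂ)) = fun i => Fin.tail w i + (k : ℂ) := rfl
  rw [h2, Hw_shift]
  congr 2; ring

theorem rpowC_analytic {E : Type*} [NormedAddCommGroup E] [NormedSpace ℂ E] (b : ℝ) {f : E → ℂ}
    {z : E} (hf : AnalyticAt ℂ f z) : AnalyticAt ℂ (fun z => rpowC b (f z)) z := by
  unfold rpowC
  exact (hf.mul analyticAt_const).cexp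

theorem Hw_analytic {E : Type*} [NormedAddCommGroup E] [NormedSpace ℂ E] (d : ℕ) :
    ∀ (al : Fin d → ℝ) (c : E → ℂ) (w : E → Fin d → ℂ) (n : ℕ) (z : E), AnalyticAt ℂ c z →
    (∀ i, AnalyticAt ℂ (fun z => w z i) z) → AnalyticAt ℂ (fun z => Hw d al (c z) (w z) n) z := by
  induction d with
  | zero => intros; exact analyticAt_const
  | succ d ih =>
    intro al c w n z hc hw
    simp only [Hw]
    refine Finset.analyticAt_fun_sum _ fun m _ => ?_
    refine (rpowC_analytic _ (((hw 0).sub hc).add analyticAt_const).neg).mul ?_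
    exact ih _ (fun z => w z 0) (fun z => Fin.tail (w z)) m z (hw 0) (fun i => hw i.succ)

/-- Polynomial growth of the inner sums, locally uniformly in the arguments. -/
theorem Hw_growth {δ B M : ℝ} (hδ : 0 < δ) (hδ1 : δ ≤ 1) (d : ℕ) : ∀ (al : Fin d → ℝ),
    (∀ i, al i ∈ Set.Ico (0 : ℝ) 1) → ∃ C : ℝ, 0 ≤ C ∧ ∀ (c : ℂ) (w : Fin d → ℂ), ‖c‖ ≤ M →
    (∀ i, ‖w i‖ ≤ M) → δ ≤ c.re + B → (∀ i, δ ≤ (w i).re + B) → ∀ n : ℕ, 1 ≤ n →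
    ‖Hw d al c w n‖ ≤ C * (n : ℝ) ^ (c.re + B) := by
  induction d with
  | zero =>
    intro al _
    refine ⟨1, zero_le_one, fun c w _ _ hc _ n hn => ?_⟩
    simp only [Hw, norm_one, one_mul]
    exact Real.one_le_rpow (by exact_mod_cast hn) (by linarith)
  | succ d ih =>
    intro al hal
    obtain ⟨C, hC, h⟩ := ih (Fin.tail al) (fun i => hal i.succ)
    refine ⟨2 ^ (2 * M + 1) * C * δ⁻¹, by positivity, fun c w hcM hwM hc hw n hn => ?_⟩
    simp only [Hw]
    refine (norm_sum_le _ _).trans ?_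
    have hterm : ∀ m ∈ Finset.Ico 1 n, ‖rpowC ((m : ℝ) + al 0) (-(w 0 - c + 1)) *
        Hw d (Fin.tail al) (w 0) (Fin.tail w) m‖
        ≤ 2 ^ (2 * M + 1) * C * (m : ℝ) ^ (c.re + B - 1) := by
      intro m hm
      have hm1 := (Finset.mem_Ico.1 hm).1
      have hm0 : (1 : ℝ) ≤ m := by exact_mod_cast hm1
      obtain ⟨ha0, ha1⟩ := hal 0
      have hm2 : (0 : ℝ) < m := by linarith
      rw [norm_mul, norm_rpowC (by linarith)]
      have h1 : ((m : ℝ) + al 0) ^ (-(w 0 - c + 1)).re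
          ≤ 2 ^ (2 * M + 1) * (m : ℝ) ^ (-(w 0 - c + 1)).re := by
        refine rpow_comparable (by linarith) (by linarith) (by linarith) ?_
        refine (Complex.abs_re_le_norm _).trans ?_
        rw [norm_neg]
        refine (norm_add_le _ _).trans ?_
        have := norm_sub_le (w 0) c
        have := hwM 0
        simp only [norm_one]
        linarith
      have h2 := h (w 0) (Fin.tail w) (hwM 0) (fun i => hwM i.succ) (hw 0)
        (fun i => hw i.succ) m hm1
      refine (mul_le_mul h1 h2 (norm_nonneg _) (by positivity)).trans (le_of_eq ?_)
      rw [show c.re + B - 1 = (-(w 0 - c + 1)).re + ((w 0).re + B) by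
        simp only [neg_re, add_re, sub_re, one_re]; ring, Real.rpow_add hm2 _ ((w 0).re + B)]
      ring
    refine (Finset.sum_le_sum hterm).trans ?_
    rw [← Finset.mul_sum, mul_assoc _ (δ⁻¹)]
    exact mul_le_mul_of_nonneg_left (sum_rpow_le hδ hδ1 hc n) (by positivity)

theorem summable_nat_rpow (j : ℕ) {p : ℝ} (hp : p < -1) :
    Summable (fun n : ℕ => ((n + j : ℕ) : ℝ) ^ p) :=
  (summable_nat_add_iff j).2 (Real.summable_nat_rpow.2 hp)

/-- For finitely many positive real parts, a common lower bound `2 δ` with `0 < δ ≤ 1`. -/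
theorem exists_delta {d : ℕ} (w : Fin d → ℂ) (hw : ∀ i, 0 < (w i).re) :
    ∃ δ : ℝ, 0 < δ ∧ δ ≤ 1 ∧ ∀ i, 2 * δ ≤ (w i).re := by
  induction d with
  | zero => exact ⟨1, one_pos, le_rfl, fun i => i.elim0⟩
  | succ d ih =>
    obtain ⟨δ, h0, h1, h⟩ := ih (Fin.tail w) (fun i => hw i.succ)
    refine ⟨min δ ((w 0).re / 2), lt_min h0 (by have := hw 0; linarith), (min_le_left _ _).trans h1,
      fun i => ?_⟩
    refine Fin.cases ?_ (fun j => ?_) i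
    · have := min_le_right δ ((w 0).re / 2); linarith
    · have := min_le_left δ ((w 0).re / 2)
      have := h j
      simp only [Fin.tail] at this
      linarith

/-- Bound for the inner sums in the domain of convergence. -/
theorem Hw_bound_conv {d : ℕ} (al : Fin (d + 1) → ℝ) (hal : ∀ i, al i ∈ Set.Ico (0 : ℝ) 1)
    (w : Fin (d + 1) → ℂ) (hw : ∀ i, 0 < (w i).re) : ∃ C δ : ℝ, 0 ≤ C ∧ 0 < δ ∧ ∀ n : ℕ, 1 ≤ n →
    ‖Hw d (Fin.tail al) (w 0) (Fin.tail w) n‖ ≤ C * (n : ℝ) ^ ((w 0).re - δ) := by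
  obtain ⟨δ, h0, h1, h⟩ := exists_delta w hw
  obtain ⟨C, hC, hg⟩ := Hw_growth (B := -δ) (M := ‖w‖) h0 h1 d (Fin.tail al) (fun i => hal i.succ)
  refine ⟨C, δ, hC, h0, fun n hn => ?_⟩
  exact hg (w 0) (Fin.tail w) (norm_le_pi_norm w 0) (fun i => norm_le_pi_norm w i.succ)
    (by have := h 0; linarith) (fun i => by have := h i.succ; simp only [Fin.tail]; linarith) n hn

theorem zt_summable {d : ℕ} (al : Fin (d + 1) → ℝ) (hal : ∀ i, al i ∈ Set.Ico (0 : ℝ) 1)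
    (w : Fin (d + 1) → ℂ) (hw : ∀ i, 0 < (w i).re) :
    Summable (fun n : ℕ => zt al w (n + 1)) := by
  obtain ⟨C, δ, hC, hδ, h⟩ := Hw_bound_conv al hal w hw
  refine Summable.of_norm_bounded ((summable_nat_rpow 1 (p := -1 - δ) (by linarith)).mul_left C)
    fun n => ?_
  have hn : (0 : ℝ) < (n + 1 : ℕ) := by positivity
  obtain ⟨ha0, ha1⟩ := hal 0
  rw [zt, norm_mul, norm_rpowC (by linarith)]
  have h1 : (((n + 1 : ℕ) : ℝ) + al 0) ^ (-(w 0 + 1)).re ≤ ((n + 1 : ℕ) : ℝ) ^ (-(w 0 + 1)).re := by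
    refine Real.rpow_le_rpow_of_nonpos hn (by linarith) ?_
    have := hw 0
    simp only [neg_re, add_re, one_re]; linarith
  refine (mul_le_mul h1 (h (n + 1) (by omega)) (norm_nonneg _) (by positivity)).trans (le_of_eq ?_)
  rw [show -1 - δ = (-(w 0 + 1)).re + ((w 0).re - δ) by
    simp only [neg_re, add_re, one_re]; ring, Real.rpow_add hn]
  ring

/-- Finite summation by parts: the powers on the left are replaced by differences plus the remainder
`eK`, and the differences are moved onto `h`. The term `n = 1` is kept apart, because the expansion
is used for `y = n + α₂ ≥ 2` only. -/
theorem sum_by_parts (K : ℕ) (a1 a2 : ℝ) (w : ℂ) (h : ℕ → ℂ) (m : ℕ) :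
    ∑ n ∈ Finset.range (m + 1), w * (rpowC (((n + 1 : ℕ) : ℝ) + a1) (-(w + 1)) * h (n + 1))
    = w * rpowC (1 + a1) (-(w + 1)) * h 1
      + ∑ n ∈ Finset.range m, eK K (a2 - a1) (((n + 2 : ℕ) : ℝ) + a2) w * h (n + 2)
      + ∑ k ∈ Finset.range K, gam (a2 - a1) k w *
        (∑ n ∈ Finset.range m, rpowC (((n + 1 : ℕ) : ℝ) + a2) (-(w + k)) * (h (n + 2) - h (n + 1))
          + rpowC (1 + a2) (-(w + k)) * h 1
          - rpowC (((m + 1 : ℕ) : ℝ) + a2) (-(w + k)) * h (m + 1)) := by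
  induction m with
  | zero => simp; ring
  | succ m ih =>
    rw [Finset.sum_range_succ, ih, Finset.sum_range_succ _ m]
    have e1 : ((m + 2 : ℕ) : ℝ) + a2 - (a2 - a1) = ((m + 1 + 1 : ℕ) : ℝ) + a1 := by
      push_cast; ring
    have e2 : ((m + 2 : ℕ) : ℝ) + a2 - 1 = ((m + 1 : ℕ) : ℝ) + a2 := by push_cast; ring
    simp only [eK, e1, e2]
    have : ∀ k ∈ Finset.range K, gam (a2 - a1) k w *
        (∑ n ∈ Finset.range (m + 1),
            rpowC (((n + 1 : ℕ) : ℝ) + a2) (-(w + k)) * (h (n + 2) - h (n + 1))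
          + rpowC (1 + a2) (-(w + k)) * h 1
          - rpowC (((m + 1 + 1 : ℕ) : ℝ) + a2) (-(w + k)) * h (m + 1 + 1))
        = gam (a2 - a1) k w *
        (∑ n ∈ Finset.range m, rpowC (((n + 1 : ℕ) : ℝ) + a2) (-(w + k)) * (h (n + 2) - h (n + 1))
          + rpowC (1 + a2) (-(w + k)) * h 1
          - rpowC (((m + 1 : ℕ) : ℝ) + a2) (-(w + k)) * h (m + 1))
        + gam (a2 - a1) k w * (rpowC (((m + 1 : ℕ) : ℝ) + a2) (-(w + k)) -
          rpowC (((m + 2 : ℕ) : ℝ) + a2) (-(w + k))) * h (m + 2) := by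
      intro k _
      rw [Finset.sum_range_succ]
      ring
    rw [Finset.sum_congr rfl this, Finset.sum_add_distrib, ← Finset.sum_mul]
    ring

/-- The region `Re w_i > -N`. -/
def Om (d N : ℕ) : Set (Fin d → ℂ) := {w | ∀ i, -(N : ℝ) < (w i).re}

theorem Om_open (d N : ℕ) : IsOpen (Om d N) := by
  simp only [Om, Set.ofPred_forall]
  exact isOpen_iInter_of_finite fun i =>
    isOpen_lt continuous_const (Complex.continuous_re.comp (continuous_apply i))

theorem Om_convex (d N : ℕ) : Convex ℝ (Om d N) := by
  have : Om d N = Set.pi Set.univ (fun _ => {z : ℂ | -(N : ℝ) < z.re}) := by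
    ext w; simp [Om]
  rw [this]
  exact convex_pi fun i _ => convex_halfSpace_re_gt _

theorem Om_mono {d N N' : ℕ} (h : N ≤ N') : Om d N ⊆ Om d N' := fun w hw i => by
  have := hw i
  have h' : (N : ℝ) ≤ N' := by exact_mod_cast h
  linarith

/-- The remainder series in the functional equation. -/
noncomputable def AK {d : ℕ} (K : ℕ) (al : Fin (d + 1) → ℝ) (a2 : ℝ) (w : Fin (d + 1) → ℂ) : ℂ :=
  ∑' n : ℕ, eK K (a2 - al 0) (((n + 2 : ℕ) : ℝ) + a2) (w 0) *
    Hw d (Fin.tail al) (w 0) (Fin.tail w) (n + 2)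

/-- With `N + 2` terms in the expansion, the decay of `eK` beats the growth of the inner sums on the
whole region `Re w_i > -N`. -/
theorem AK_bound {d : ℕ} (N : ℕ) (al : Fin (d + 1) → ℝ) (hal : ∀ i, al i ∈ Set.Ico (0 : ℝ) 1)
    {a2 : ℝ} (ha2 : a2 ∈ Set.Ico (0 : ℝ) 1) (M : ℝ) : ∃ C : ℝ, ∀ w ∈ Om (d + 1) N, ‖w‖ ≤ M →
    ∀ n : ℕ, ‖eK (N + 2) (a2 - al 0) (((n + 2 : ℕ) : ℝ) + a2) (w 0) *
    Hw d (Fin.tail al) (w 0) (Fin.tail w) (n + 2)‖ ≤ C * ((n + 2 : ℕ) : ℝ) ^ (-2 : ℝ) := by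
  obtain ⟨ha0, ha1⟩ := hal 0
  obtain ⟨ha3, ha4⟩ := ha2
  have hb : |a2 - al 0| ≤ 1 := by rw [abs_le]; constructor <;> linarith
  obtain ⟨C1, hC1, h1⟩ := eK_bound (N + 2) hb M
  obtain ⟨C2, hC2, h2⟩ := Hw_growth (δ := 1) (B := N + 1) (M := M) one_pos le_rfl d (Fin.tail al)
    (fun i => hal i.succ)
  refine ⟨C1 * C2, fun w hw hwM n => ?_⟩
  have hn : (0 : ℝ) < (n + 2 : ℕ) := by positivity
  have hn2 : (2 : ℝ) ≤ (n + 2 : ℕ) := by push_cast; linarith [n.cast_nonneg (α := ℝ)]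
  have hwi : ∀ i, ‖w i‖ ≤ M := fun i => (norm_le_pi_norm w i).trans hwM
  have g1 := h1 (w 0) (hwi 0) (((n + 2 : ℕ) : ℝ) + a2) (by linarith)
  have g2 := h2 (w 0) (Fin.tail w) (hwi 0) (fun i => hwi i.succ) (by linarith [hw 0])
    (fun i => by have := hw i.succ; simp only [Fin.tail]; linarith) (n + 2) (by omega)
  have g3 : (((n + 2 : ℕ) : ℝ) + a2) ^ (-(w 0).re - ((N + 2 : ℕ) + 1))
      ≤ ((n + 2 : ℕ) : ℝ) ^ (-(w 0).re - ((N + 2 : ℕ) + 1)) := by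
    refine Real.rpow_le_rpow_of_nonpos hn (by linarith) ?_
    have := hw 0
    push_cast; linarith
  rw [norm_mul]
  refine (mul_le_mul (g1.trans (mul_le_mul_of_nonneg_left g3 hC1)) g2 (norm_nonneg _)
    (by positivity)).trans (le_of_eq ?_)
  rw [show (-2 : ℝ) = (-(w 0).re - ((N + 2 : ℕ) + 1)) + ((w 0).re + (N + 1)) by push_cast; ring,
    Real.rpow_add hn _ ((w 0).re + (N + 1))]
  ring

theorem eK_analytic {E : Type*} [NormedAddCommGroup E] [NormedSpace ℂ E] (K : ℕ) (b y : ℝ)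
    {f : E → ℂ} {z : E} (hf : AnalyticAt ℂ f z) : AnalyticAt ℂ (fun z => eK K b y (f z)) z := by
  unfold eK gam ph
  refine (hf.mul (rpowC_analytic _ (hf.add analyticAt_const).neg)).sub ?_
  refine Finset.analyticAt_fun_sum _ fun k _ => ?_
  refine AnalyticAt.mul ?_ ?_
  · simp only [div_eq_mul_inv]
    refine (analyticAt_const.mul ?_).mul analyticAt_const
    exact Finset.analyticAt_fun_prod _ fun j _ => hf.add analyticAt_const
  · exact (rpowC_analytic _ (hf.add analyticAt_const).neg).sub
      (rpowC_analytic _ (hf.add analyticAt_const).neg)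

theorem gam_analytic {E : Type*} [NormedAddCommGroup E] [NormedSpace ℂ E] (b : ℝ) (k : ℕ)
    {f : E → ℂ} {z : E} (hf : AnalyticAt ℂ f z) : AnalyticAt ℂ (fun z => gam b k (f z)) z := by
  unfold gam ph
  simp only [div_eq_mul_inv]
  refine (analyticAt_const.mul ?_).mul analyticAt_const
  exact Finset.analyticAt_fun_prod _ fun j _ => hf.add analyticAt_const

theorem coord_analytic {d : ℕ} (i : Fin d) (z : Fin d → ℂ) :
    AnalyticAt ℂ (fun z : Fin d → ℂ => z i) z :=
  (ContinuousLinearMap.proj (R := ℂ) (φ := fun _ : Fin d => ℂ) i).analyticAt z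

theorem AK_analytic {d : ℕ} (N : ℕ) (al : Fin (d + 1) → ℝ) (hal : ∀ i, al i ∈ Set.Ico (0 : ℝ) 1)
    {a2 : ℝ} (ha2 : a2 ∈ Set.Ico (0 : ℝ) 1) :
    AnalyticOnNhd ℂ (AK (N + 2) al a2) (Om (d + 1) N) := by
  refine analyticOnNhd_tsum _ (fun n w _ => ?_) (Om_open _ _) fun p hp => ?_
  · exact (eK_analytic _ _ _ (coord_analytic 0 w)).mul
      (Hw_analytic d _ (fun z => z 0) (fun z => Fin.tail z) (n + 2) w (coord_analytic 0 w)
        (fun i => coord_analytic i.succ w))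
  · obtain ⟨C, hC⟩ := AK_bound (d := d) N al hal ha2 (‖p‖ + 1)
    refine ⟨Om (d + 1) N ∩ Metric.ball p 1, Filter.inter_mem ((Om_open _ _).mem_nhds hp)
      (Metric.ball_mem_nhds p one_pos), _, (summable_nat_rpow 2 (p := -2) (by norm_num)).mul_left C,
      fun n w hw => hC w hw.1 ?_ n⟩
    have h1 := hw.2
    rw [Metric.mem_ball, dist_eq_norm] at h1
    have h2 := norm_add_le (w - p) p
    rw [sub_add_cancel] at h2
    linarith

open Filter Topology in
/-- Summation by parts in the domain of convergence, in the limit. The limits `S k` of the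
differenced series are left abstract. -/
theorem fe_core {d : ℕ} (N : ℕ) (al : Fin (d + 1) → ℝ) (hal : ∀ i, al i ∈ Set.Ico (0 : ℝ) 1)
    {a2 : ℝ} (ha2 : a2 ∈ Set.Ico (0 : ℝ) 1) (w : Fin (d + 1) → ℂ) (hw : ∀ i, 0 < (w i).re)
    (S : ℕ → ℂ) (hS : ∀ k : ℕ, Tendsto (fun m => ∑ n ∈ Finset.range m,
      rpowC (((n + 1 : ℕ) : ℝ) + a2) (-(w 0 + k)) *
        (Hw d (Fin.tail al) (w 0) (Fin.tail w) (n + 2) -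
          Hw d (Fin.tail al) (w 0) (Fin.tail w) (n + 1))) atTop (𝓝 (S k))) :
    w 0 * Zw al w = w 0 * rpowC (1 + al 0) (-(w 0 + 1)) * Hw d (Fin.tail al) (w 0) (Fin.tail w) 1
      + AK (N + 2) al a2 w + ∑ k ∈ Finset.range (N + 2), gam (a2 - al 0) k (w 0) *
        (S k + rpowC (1 + a2) (-(w 0 + k)) * Hw d (Fin.tail al) (w 0) (Fin.tail w) 1) := by
  have hw0 : w ∈ Om (d + 1) N := fun i => by
    have := hw i
    have : (0 : ℝ) ≤ N := N.cast_nonneg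
    linarith
  have l1 : Tendsto (fun m => ∑ n ∈ Finset.range (m + 1),
      w 0 * (rpowC (((n + 1 : ℕ) : ℝ) + al 0) (-(w 0 + 1)) *
        Hw d (Fin.tail al) (w 0) (Fin.tail w) (n + 1))) atTop (𝓝 (w 0 * Zw al w)) := by
    have := ((zt_summable al hal w hw).hasSum.mul_left (w 0)).tendsto_sum_nat
    exact this.comp (tendsto_add_atTop_nat 1)
  have l2 : Tendsto (fun m => ∑ n ∈ Finset.range m,
      eK (N + 2) (a2 - al 0) (((n + 2 : ℕ) : ℝ) + a2) (w 0) *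
        Hw d (Fin.tail al) (w 0) (Fin.tail w) (n + 2)) atTop (𝓝 (AK (N + 2) al a2 w)) := by
    obtain ⟨C, hC⟩ := AK_bound (d := d) N al hal ha2 ‖w‖
    have : Summable (fun n : ℕ => eK (N + 2) (a2 - al 0) (((n + 2 : ℕ) : ℝ) + a2) (w 0) *
        Hw d (Fin.tail al) (w 0) (Fin.tail w) (n + 2)) :=
      Summable.of_norm_bounded ((summable_nat_rpow 2 (p := -2) (by norm_num)).mul_left C)
        (hC w hw0 le_rfl)
    exact this.hasSum.tendsto_sum_nat
  have l3 : ∀ k : ℕ, Tendsto (fun m : ℕ => rpowC (((m + 1 : ℕ) : ℝ) + a2) (-(w 0 + k)) *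
      Hw d (Fin.tail al) (w 0) (Fin.tail w) (m + 1)) atTop (𝓝 0) := by
    intro k
    obtain ⟨C, δ, hC, hδ, h⟩ := Hw_bound_conv al hal w hw
    have hz : Tendsto (fun m : ℕ => C * ((m + 1 : ℕ) : ℝ) ^ (-δ)) atTop (𝓝 0) := by
      have := ((tendsto_rpow_neg_atTop hδ).comp (tendsto_natCast_atTop_atTop (R := ℝ))).comp
        (tendsto_add_atTop_nat 1)
      simpa using this.const_mul C
    refine squeeze_zero_norm (fun m => ?_) hz
    have hn : (0 : ℝ) < (m + 1 : ℕ) := by positivity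
    have hn1 : (1 : ℝ) ≤ (m + 1 : ℕ) := by exact_mod_cast Nat.le_add_left 1 m
    obtain ⟨ha3, ha4⟩ := ha2
    have hkk : (0 : ℝ) ≤ k := k.cast_nonneg
    rw [norm_mul, norm_rpowC (by linarith)]
    have h1 : (((m + 1 : ℕ) : ℝ) + a2) ^ (-(w 0 + k)).re ≤ ((m + 1 : ℕ) : ℝ) ^ (-(w 0).re) := by
      have := hw 0
      refine (Real.rpow_le_rpow_of_nonpos hn
        (show ((m + 1 : ℕ) : ℝ) ≤ ((m + 1 : ℕ) : ℝ) + a2 by linarith) ?_).trans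
        (Real.rpow_le_rpow_of_exponent_le hn1 ?_)
      · simp only [neg_re, add_re, natCast_re]; linarith
      · simp only [neg_re, add_re, natCast_re]; linarith
    refine (mul_le_mul h1 (h (m + 1) (by omega)) (norm_nonneg _) (by positivity)).trans
      (le_of_eq ?_)
    rw [show -δ = (-(w 0).re) + ((w 0).re - δ) by ring, Real.rpow_add hn]
    ring
  have l4 := (tendsto_const_nhds (x := w 0 * rpowC (1 + al 0) (-(w 0 + 1)) *
    Hw d (Fin.tail al) (w 0) (Fin.tail w) 1)).add l2
  have l5 := l4.add (tendsto_finsetSum (Finset.range (N + 2)) fun k _ =>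
    (((hS k).add_const (rpowC (1 + a2) (-(w 0 + k)) *
      Hw d (Fin.tail al) (w 0) (Fin.tail w) 1)).sub (l3 k)).const_mul (gam (a2 - al 0) k (w 0)))
  refine (tendsto_nhds_unique l1 (l5.congr fun m => ?_)).trans ?_
  · exact (sum_by_parts (N + 2) (al 0) a2 (w 0) _ m).symm
  · simp

/-- The functional equation in depth at least two. -/
theorem fe_succ {d : ℕ} (N : ℕ) (al : Fin (d + 2) → ℝ) (hal : ∀ i, al i ∈ Set.Ico (0 : ℝ) 1)
    (w : Fin (d + 2) → ℂ) (hw : ∀ i, 0 < (w i).re) :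
    w 0 * Zw al w = AK (N + 2) al (al 1) w + ∑ k ∈ Finset.range (N + 2),
      gam (al 1 - al 0) k (w 0) * Zw (Fin.tail al) (fun i => Fin.tail w i + k) := by
  have h := fe_core N al hal (hal 1) w hw (fun k => Zw (Fin.tail al) (fun i => Fin.tail w i + k))
    (fun k => by
      have hs := (zt_summable (Fin.tail al) (fun i => hal i.succ) (fun i => Fin.tail w i + k)
        (fun i => by
          have := hw i.succ
          have : (0 : ℝ) ≤ k := k.cast_nonneg
          simp only [Fin.tail, add_re, natCast_re]; linarith)).hasSum.tendsto_sum_nat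
      refine hs.congr fun m => Finset.sum_congr rfl fun n _ => ?_
      exact (Hw_diff d (Fin.tail al) (w 0) (Fin.tail w) (n + 1) (by omega) k).symm)
  rw [h, Hw_one]
  simp

/-- The functional equation in depth one. -/
theorem fe_zero (N : ℕ) (al : Fin 1 → ℝ) (hal : ∀ i, al i ∈ Set.Ico (0 : ℝ) 1)
    (w : Fin 1 → ℂ) (hw : ∀ i, 0 < (w i).re) :
    w 0 * Zw al w = w 0 * rpowC (1 + al 0) (-(w 0 + 1)) + AK (N + 2) al 0 w
      + ∑ k ∈ Finset.range (N + 2), gam (0 - al 0) k (w 0) := by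
  have h := fe_core N al hal (a2 := 0) (by simp) w hw (fun k => 0)
    (fun k => by simp [Hw])
  rw [h]
  simp [Hw, rpowC_one]

theorem eK_zero (K : ℕ) (b y : ℝ) : eK (K + 1) b y 0 = 0 := by
  rw [eK, Finset.sum_range_succ']
  simp [gam_succ_zero, rpowC_zero]

/-- Every term of the remainder has a factor vanishing at `w 0 = 0`. -/
theorem AK_zero {d : ℕ} (K : ℕ) (al : Fin (d + 1) → ℝ) (a2 : ℝ) (w : Fin (d + 1) → ℂ)
    (hw : w 0 = 0) : AK (K + 1) al a2 w = 0 := by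
  simp [AK, hw, eK_zero]

/-! ### Meromorphic functions with simple poles on hyperplanes `w i = -k` -/

/-- The union of the hyperplanes `w i = -k` with `P i k`. -/
def pol {d : ℕ} (P : Fin d → ℕ → Prop) : Set (Fin d → ℂ) := {w | ∃ i k, P i k ∧ w i = -(k : ℂ)}

/-- The product of the linear forms `w i + k` over a finite set of pairs `(i, k)`. -/
noncomputable def linProd {d : ℕ} (T : Finset (Fin d × ℕ)) (w : Fin d → ℂ) : ℂ :=
  ∏ q ∈ T, (w q.1 + (q.2 : ℂ))

/-- On the region `Re w_i > -N` the function `F` is meromorphic with at most simple poles along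
finitely many of the hyperplanes `w i = -k`, `P i k`. Nothing is asked of the values of `F` on the
polar set itself. -/
def MerOn {d : ℕ} (N : ℕ) (P : Fin d → ℕ → Prop) (F : (Fin d → ℂ) → ℂ) : Prop :=
  ∃ T : Finset (Fin d × ℕ), (∀ q ∈ T, P q.1 q.2) ∧ ∃ G : (Fin d → ℂ) → ℂ,
    AnalyticOnNhd ℂ G (Om d N) ∧ ∀ w ∈ Om d N, w ∉ pol P → G w = linProd T w * F w

theorem linProd_analytic {d : ℕ} (T : Finset (Fin d × ℕ)) (w : Fin d → ℂ) : AnalyticAt ℂ (linProd T) w :=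
  Finset.analyticAt_fun_prod _ fun q _ => (coord_analytic q.1 w).add analyticAt_const

theorem linProd_ne_zero {d : ℕ} {P : Fin d → ℕ → Prop} {T : Finset (Fin d × ℕ)}
    (hT : ∀ q ∈ T, P q.1 q.2) {w : Fin d → ℂ} (hw : w ∉ pol P) : linProd T w ≠ 0 := by
  rw [linProd, Finset.prod_ne_zero_iff]
  intro q hq h
  exact hw ⟨q.1, q.2, hT q hq, eq_neg_of_add_eq_zero_left h⟩

theorem linProd_sdiff {d : ℕ} {T T' : Finset (Fin d × ℕ)} (h : T ⊆ T') (w : Fin d → ℂ) :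
    linProd T' w = linProd (T' \ T) w * linProd T w := (Finset.prod_sdiff h).symm

namespace MerOn

variable {d N : ℕ} {P P' : Fin d → ℕ → Prop} {F F' : (Fin d → ℂ) → ℂ}

theorem congr (h : MerOn N P F) (e : ∀ w ∈ Om d N, w ∉ pol P → F w = F' w) : MerOn N P F' := by
  obtain ⟨T, hT, G, hG, h⟩ := h
  exact ⟨T, hT, G, hG, fun w hw hw' => by rw [h w hw hw', e w hw hw']⟩

theorem mono (h : MerOn N P F) (hP : ∀ i k, P i k → P' i k) : MerOn N P' F := by
  obtain ⟨T, hT, G, hG, h⟩ := h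
  exact ⟨T, fun q hq => hP _ _ (hT q hq), G, hG, fun w hw hw' => h w hw fun ⟨i, k, h1, h2⟩ =>
    hw' ⟨i, k, hP i k h1, h2⟩⟩

theorem restrict {N' : ℕ} (h : MerOn N P F) (hN : N' ≤ N) : MerOn N' P F := by
  obtain ⟨T, hT, G, hG, h⟩ := h
  exact ⟨T, hT, G, hG.mono (Om_mono hN), fun w hw => h w (Om_mono hN hw)⟩

theorem of_analytic (h : AnalyticOnNhd ℂ F (Om d N)) : MerOn N P F :=
  ⟨∅, by simp, F, h, fun w _ _ => by simp [linProd]⟩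

theorem mul_analytic {f : (Fin d → ℂ) → ℂ} (hf : AnalyticOnNhd ℂ f (Om d N)) (h : MerOn N P F) :
    MerOn N P (fun w => f w * F w) := by
  obtain ⟨T, hT, G, hG, h⟩ := h
  exact ⟨T, hT, fun w => f w * G w, fun w hw => (hf w hw).mul (hG w hw),
    fun w hw hw' => by simp only [h w hw hw']; ring⟩

theorem add (h : MerOn N P F) (h' : MerOn N P F') : MerOn N P (fun w => F w + F' w) := by
  classical
  obtain ⟨T, hT, G, hG, h⟩ := h
  obtain ⟨T', hT', G', hG', h'⟩ := h'
  refine ⟨T ∪ T', fun q hq => (Finset.mem_union.1 hq).elim (hT q) (hT' q),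
    fun w => linProd ((T ∪ T') \ T) w * G w + linProd ((T ∪ T') \ T') w * G' w, fun w hw =>
      ((linProd_analytic _ w).mul (hG w hw)).add ((linProd_analytic _ w).mul (hG' w hw)),
    fun w hw hw' => ?_⟩
  beta_reduce
  rw [h w hw hw', h' w hw hw', ← mul_assoc, ← mul_assoc, ← linProd_sdiff Finset.subset_union_left,
    ← linProd_sdiff Finset.subset_union_right, mul_add]

theorem sum {ι : Type*} (s : Finset ι) {f : ι → (Fin d → ℂ) → ℂ} (h : ∀ i ∈ s, MerOn N P (f i)) :
    MerOn N P (fun w => ∑ i ∈ s, f i w) := by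
  classical
  induction s using Finset.induction_on with
  | empty =>
    simp only [Finset.sum_empty]
    exact of_analytic fun _ _ => analyticAt_const
  | insert a s ha ih =>
    simp only [Finset.sum_insert ha]
    exact (h a (Finset.mem_insert_self a s)).add
      (ih fun i hi => h i (Finset.mem_insert_of_mem hi))

/-- Uniqueness of meromorphic continuation from the region `Re w_i > 0`. -/
theorem unique (h : MerOn N P F) (h' : MerOn N P F')
    (e : ∀ w ∈ Om d 0, w ∉ pol P → F w = F' w)
    (w : Fin d → ℂ) (hw : w ∈ Om d N) (hw' : w ∉ pol P) : F w = F' w := by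
  obtain ⟨T, hT, G, hG, h⟩ := h
  obtain ⟨T', hT', G', hG', h'⟩ := h'
  have h1 : AnalyticOnNhd ℂ (fun w => linProd T' w * G w) (Om d N) :=
    fun w hw => (linProd_analytic _ w).mul (hG w hw)
  have h2 : AnalyticOnNhd ℂ (fun w => linProd T w * G' w) (Om d N) :=
    fun w hw => (linProd_analytic _ w).mul (hG' w hw)
  have hone : (fun _ => 1 : Fin d → ℂ) ∈ Om d 0 := fun i => by simp
  have hpol : ∀ w ∈ Om d 0, w ∉ pol P := by
    rintro w hw ⟨i, k, -, hk⟩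
    have := hw i
    rw [hk] at this
    have h0 : (0 : ℝ) ≤ k := k.cast_nonneg
    simp at this
    linarith
  have key := h1.eqOn_of_preconnected_of_eventuallyEq h2 (Om_convex d N).isPreconnected
    (Om_mono (Nat.zero_le N) hone) (by
      filter_upwards [(Om_open d 0).mem_nhds hone] with w hw
      rw [h w (Om_mono (Nat.zero_le N) hw) (hpol w hw),
        h' w (Om_mono (Nat.zero_le N) hw) (hpol w hw), e w hw (hpol w hw)]
      ring) hw
  simp only at key
  rw [h w hw hw', h' w hw hw'] at key
  have k1 := linProd_ne_zero hT hw'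
  have k2 := linProd_ne_zero hT' hw'
  refine mul_left_cancel₀ (mul_ne_zero k1 k2) ?_
  linear_combination key

/-- Pulling back along `w ↦ tail w + k` shifts the polar hyperplanes. -/
theorem shift {Q : Fin (d + 1) → ℕ → Prop} (k : ℕ) (h : MerOn N P F)
    (hQ : ∀ i k', P i k' → Q i.succ (k' + k)) :
    MerOn N Q (fun w => F (fun i => Fin.tail w i + k)) := by
  classical
  obtain ⟨T, hT, G, hG, h⟩ := h
  have hOm : ∀ w ∈ Om (d + 1) N, (fun i => Fin.tail w i + (k : ℂ)) ∈ Om d N := by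
    intro w hw i
    have := hw i.succ
    have h0 : (0 : ℝ) ≤ k := k.cast_nonneg
    simp only [Fin.tail, add_re, natCast_re]; linarith
  refine ⟨T.image (fun q => (q.1.succ, q.2 + k)), ?_, fun w => G (fun i => Fin.tail w i + k),
    fun w hw => ?_, fun w hw hw' => ?_⟩
  · intro q hq
    obtain ⟨q', hq', rfl⟩ := Finset.mem_image.1 hq
    exact hQ _ _ (hT _ hq')
  · refine AnalyticAt.fun_comp (g := G) (f := fun w : Fin (d + 1) → ℂ =>
      (fun i => Fin.tail w i + (k : ℂ) : Fin d → ℂ)) (hG _ (hOm w hw)) ?_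
    exact AnalyticAt.pi fun i => (coord_analytic i.succ w).add analyticAt_const
  · beta_reduce
    rw [h _ (hOm w hw)]
    · congr 1
      rw [linProd, linProd, Finset.prod_image]
      · refine Finset.prod_congr rfl fun q _ => ?_
        simp only [Fin.tail]; push_cast; ring
      · intro q _ q' _ hqq
        simp only [Prod.mk.injEq, Fin.succ_inj, add_left_inj] at hqq
        exact Prod.ext hqq.1 hqq.2
    · rintro ⟨i, k', h1, h2⟩
      refine hw' ⟨i.succ, k' + k, hQ i k' h1, ?_⟩
      simp only [Fin.tail] at h2
      push_cast
      linear_combination h2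

/-- Dividing by `w 0` adds the hyperplane `w 0 = 0`; the pole stays simple because there was no pole
along it before. -/
theorem div_zero {Q Q' : Fin (d + 1) → ℕ → Prop} {R : (Fin (d + 1) → ℂ) → ℂ} (h : MerOn N Q R)
    (h0 : ∀ k, ¬ Q 0 k) (hQ : ∀ i k, Q i k → Q' i k) (hQ0 : Q' 0 0) :
    MerOn N Q' (fun w => R w / w 0) := by
  classical
  obtain ⟨T, hT, G, hG, h⟩ := h
  refine ⟨insert (0, 0) T, ?_, G, hG, fun w hw hw' => ?_⟩
  · intro q hq
    rcases Finset.mem_insert.1 hq with rfl | hq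
    · exact hQ0
    · exact hQ _ _ (hT q hq)
  · rw [h w hw fun ⟨i, k, h1, h2⟩ => hw' ⟨i, k, hQ i k h1, h2⟩, linProd, linProd, Finset.prod_insert
      fun hm => h0 0 (hT _ hm)]
    have : w 0 ≠ 0 := fun h => hw' ⟨0, 0, hQ0, by simp [h]⟩
    simp only [Nat.cast_zero, add_zero]
    field_simp

end MerOn

theorem exists_Om {d : ℕ} (w : Fin d → ℂ) : ∃ N, w ∈ Om d N := by
  obtain ⟨N, hN⟩ := exists_nat_gt ‖w‖
  refine ⟨N, fun i => ?_⟩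
  have h1 := (abs_le.1 (Complex.abs_re_le_norm (w i))).1
  have h2 := norm_le_pi_norm w i
  linarith

theorem pol_closed {d : ℕ} (P : Fin d → ℕ → Prop) : IsClosed (pol P) := by
  have : pol P = ⋃ i, (fun w : Fin d → ℂ => w i) ⁻¹' {z | ∃ k : ℕ, P i k ∧ z = -(k : ℂ)} := by
    ext w; simp [pol]
  rw [this]
  refine isClosed_iUnion_of_finite fun i => IsClosed.preimage (continuous_apply i) ?_
  refine Metric.isClosed_of_pairwise_le_dist one_pos ?_
  rintro x ⟨k, -, rfl⟩ y ⟨l, -, rfl⟩ hne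
  have hkl : k ≠ l := fun h => hne (by rw [h])
  rw [dist_neg_neg, dist_eq_norm]
  have h1 : ((k : ℂ) - l) = ((((k : ℤ) - l : ℤ) : ℝ) : ℂ) := by push_cast; ring
  rw [h1, Complex.norm_real, Real.norm_eq_abs, ← Int.cast_abs]
  have : (1 : ℤ) ≤ |(k : ℤ) - l| := Int.one_le_abs (by omega)
  exact_mod_cast this

/-- Local form of `MerOn`: near `p`, only the hyperplanes through `p` are needed as factors. The other
factors are invertible near `p`. -/
theorem mer_local {d : ℕ} {P : Fin d → ℕ → Prop} {F : (Fin d → ℂ) → ℂ} (hF : ∀ N, MerOn N P F)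
    (p : Fin d → ℂ) (T : Finset (Fin d × ℕ)) (hT : ∀ i k, (i, k) ∈ T ↔ P i k ∧ p i = -(k : ℂ)) :
    ∃ V, ∃ G : (Fin d → ℂ) → ℂ, IsOpen V ∧ p ∈ V ∧ AnalyticOnNhd ℂ G V ∧
      ∀ w ∈ V, w ∉ pol P → G w = linProd T w * F w := by
  classical
  obtain ⟨N, hN⟩ := exists_Om p
  obtain ⟨T', hT', G, hG, h⟩ := hF N
  have hc : Continuous (linProd (T' \ T)) :=
    continuous_iff_continuousAt.2 fun w => (linProd_analytic _ w).continuousAt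
  refine ⟨Om d N ∩ {w | linProd (T' \ T) w ≠ 0}, fun w => linProd (T \ T') w * G w / linProd (T' \ T) w,
    (Om_open d N).inter (isOpen_ne_fun hc continuous_const), ⟨hN, ?_⟩, ?_, ?_⟩
  · rw [Set.mem_ofPred_eq, linProd, Finset.prod_ne_zero_iff]
    rintro ⟨i, k⟩ hq h0
    obtain ⟨h1, h2⟩ := Finset.mem_sdiff.1 hq
    exact h2 ((hT i k).2 ⟨hT' _ h1, eq_neg_of_add_eq_zero_left h0⟩)
  · exact fun w hw => ((linProd_analytic _ w).mul (hG w hw.1)).div (linProd_analytic _ w) hw.2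
  · rintro w ⟨hw, hw1⟩ hw'
    beta_reduce
    rw [h w hw hw', div_eq_iff hw1]
    have h1 := linProd_sdiff (Finset.inter_subset_left (s₁ := T) (s₂ := T')) w
    have h2 := linProd_sdiff (Finset.inter_subset_right (s₁ := T) (s₂ := T')) w
    rw [Finset.sdiff_inter_self_left] at h1
    rw [Finset.sdiff_inter_self_right] at h2
    rw [h1, h2]; ring

theorem mer_analytic {d : ℕ} {P : Fin d → ℕ → Prop} {F : (Fin d → ℂ) → ℂ}
    (hF : ∀ N, MerOn N P F) : AnalyticOnNhd ℂ F (pol P)ᶜ := by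
  intro p hp
  obtain ⟨V, G, hV, hpV, hG, h⟩ := mer_local hF p ∅ (fun i k => by
    simp only [Finset.notMem_empty, false_iff]
    exact fun hh => hp ⟨i, k, hh⟩)
  refine (hG p hpV).congr ?_
  filter_upwards [hV.mem_nhds hpV, (pol_closed P).isOpen_compl.mem_nhds hp] with w h1 h2
  rw [h w h1 h2]; simp [linProd]

open Filter Topology in
/-- At a point of `w i = -k` on no other hyperplane of the form `w j = -m`, the residue along
`w i = -k` exists; it may be zero. -/
theorem mer_limit {d : ℕ} {P : Fin d → ℕ → Prop} {F : (Fin d → ℂ) → ℂ}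
    (hF : ∀ N, MerOn N P F) (p : Fin d → ℂ) (i : Fin d) (k : ℕ) (hp : p i = -(k : ℂ))
    (hp' : ∀ j, j ≠ i → ∀ m : ℕ, p j ≠ -(m : ℂ)) :
    ∃ L : ℂ, Tendsto (fun w => (w i + k) * F w) (𝓝[(pol P)ᶜ] p) (𝓝 L) := by
  have hu : ∀ (i' : Fin d) (k' : ℕ), p i' = -(k' : ℂ) → i' = i ∧ k' = k := by
    intro i' k' h
    have : i' = i := by
      by_contra hne
      exact hp' i' hne k' h
    subst this
    rw [hp, neg_inj] at h
    exact ⟨rfl, by exact_mod_cast h.symm⟩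
  by_cases hP : P i k
  · obtain ⟨V, G, hV, hpV, hG, h⟩ := mer_local hF p {(i, k)} (fun i' k' => by
      rw [Finset.mem_singleton, Prod.mk.injEq]
      constructor
      · rintro ⟨rfl, rfl⟩; exact ⟨hP, hp⟩
      · exact fun hh => hu _ _ hh.2)
    refine ⟨G p, ((hG p hpV).continuousAt.tendsto.mono_left nhdsWithin_le_nhds).congr' ?_⟩
    filter_upwards [self_mem_nhdsWithin, mem_nhdsWithin_of_mem_nhds (hV.mem_nhds hpV)] with w h1 h2
    rw [h w h2 h1]; simp [linProd]
  · have hpp : p ∈ (pol P)ᶜ := by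
      rintro ⟨i', k', h1, h2⟩
      obtain ⟨rfl, rfl⟩ := hu _ _ h2
      exact hP h1
    have hA := mer_analytic hF p hpp
    have := ((coord_analytic i p).add (analyticAt_const (v := (k : ℂ)))).mul hA
    exact ⟨_, this.continuousAt.tendsto.mono_left nhdsWithin_le_nhds⟩

/-! ### Meromorphic continuation -/

/-- The pairs `(i, k)` for which `w i = -k` is a polar hyperplane. -/
def PP {d : ℕ} (al : Fin (d + 1) → ℝ) (i : Fin (d + 1)) (k : ℕ) : Prop :=
  ((i : ℕ) = 0 ∧ k = 0) ∨ ((i : ℕ) = 1 ∧ Bv k (al i - al 0) ≠ 0) ∨ 2 ≤ (i : ℕ)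

/-- `F` is a meromorphic continuation of `Zw al` to the whole space, with at most simple poles,
all of them along hyperplanes of the collection `PP al`. -/
def Good {d : ℕ} (al : Fin (d + 1) → ℝ) (F : (Fin (d + 1) → ℂ) → ℂ) : Prop :=
  (∀ N, MerOn N (PP al) F) ∧ ∀ w ∈ Om (d + 1) 0, F w = Zw al w

/-- Continuations to the regions `Om N` glue together. -/
theorem glue {d : ℕ} {P : Fin d → ℕ → Prop} {Z : (Fin d → ℂ) → ℂ}
    (h : ∀ N : ℕ, ∃ F, MerOn N P F ∧ ∀ w ∈ Om d 0, F w = Z w) :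
    ∃ F, (∀ N, MerOn N P F) ∧ ∀ w ∈ Om d 0, F w = Z w := by
  choose f hf hz using h
  choose n hn using exists_Om (d := d)
  refine ⟨fun w => f (n w) w, fun N => (hf N).congr fun w hw hw' => ?_, fun w hw => hz _ w hw⟩
  have e : ∀ M, ∀ w ∈ Om d 0, w ∉ pol P → f N w = f M w := fun M w hw _ => by
    rw [hz N w hw, hz M w hw]
  rcases le_total N (n w) with hle | hle
  · exact (hf N).unique ((hf _).restrict hle) (e _) w hw hw'
  · exact ((hf N).restrict hle).unique (hf _) (e _) w (hn w) hw'

/-- A polar hyperplane of the function of lower depth, shifted by `k`, is polar in depth `d + 2` as soon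
as the coefficient `B_k(α₂ - α₁)` of that shift in the functional equation is nonzero. -/
theorem PP_tail {d : ℕ} {al : Fin (d + 2) → ℝ} {k : ℕ} (hk : Bv k (al 1 - al 0) ≠ 0)
    (i : Fin (d + 1)) (k' : ℕ) (h : PP (Fin.tail al) i k') : PP al i.succ (k' + k) := by
  rcases h with ⟨h1, h2⟩ | ⟨h1, -⟩ | h1
  · right; left
    have : i = 0 := Fin.ext h1
    subst this; subst h2
    exact ⟨by simp, by simpa using hk⟩
  · right; right; simp [h1]
  · right; right; simp; omega

theorem not_PP_zero_succ {d : ℕ} (al : Fin (d + 1) → ℝ) (k : ℕ) : ¬ PP al 0 (k + 1) := by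
  rintro (⟨-, h⟩ | ⟨h, -⟩ | h) <;> simp at h

/-- The right-hand side of the functional equation, with `F` in place of the inner zeta function,
has no pole along `w 0 = 0`. -/
theorem mer_rhs {d : ℕ} {al : Fin (d + 2) → ℝ} (hal : ∀ i, al i ∈ Set.Ico (0 : ℝ) 1)
    {F : (Fin (d + 1) → ℂ) → ℂ} (hF : Good (Fin.tail al) F) (N : ℕ) :
    MerOn N (fun i k => i ≠ 0 ∧ PP al i k) (fun w => AK (N + 2) al (al 1) w +
      ∑ k ∈ Finset.range (N + 2), gam (al 1 - al 0) k (w 0) *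
        F (fun i => Fin.tail w i + k)) := by
  refine (MerOn.of_analytic (AK_analytic N al hal (hal 1))).add (MerOn.sum _ fun k _ => ?_)
  by_cases hk : Bv k (al 1 - al 0) = 0
  · refine (MerOn.of_analytic (F := fun _ => 0) fun _ _ => analyticAt_const).congr fun w _ _ => ?_
    simp [gam, hk]
  · refine MerOn.mul_analytic (f := fun w : Fin (d + 2) → ℂ => gam (al 1 - al 0) k (w 0))
      (fun w _ => gam_analytic _ k (coord_analytic 0 w)) ?_
    exact (hF.1 N).shift k fun i k' h => ⟨Fin.succ_ne_zero i, PP_tail hk i k' h⟩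

theorem Om_zero_ne {d : ℕ} {w : Fin (d + 1) → ℂ} (hw : w ∈ Om (d + 1) 0) : w 0 ≠ 0 := by
  intro h
  have := hw 0
  simp [h] at this

theorem Om_zero_tail {d : ℕ} {w : Fin (d + 2) → ℂ} (hw : w ∈ Om (d + 2) 0) (k : ℕ) :
    (fun i => Fin.tail w i + (k : ℂ)) ∈ Om (d + 1) 0 := by
  intro i
  have := hw i.succ
  have h0 : (0 : ℝ) ≤ k := k.cast_nonneg
  simp only [Fin.tail, add_re, natCast_re, CharP.cast_eq_zero, neg_zero] at this ⊢
  linarith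

/-- The continuation exists in every depth, by induction along the functional equation. -/
theorem exists_good : ∀ (d : ℕ) (al : Fin (d + 1) → ℝ), (∀ i, al i ∈ Set.Ico (0 : ℝ) 1) →
    ∃ F, Good al F
  | 0, al, hal => by
    refine glue fun N => ⟨fun w => (w 0 * rpowC (1 + al 0) (-(w 0 + 1)) + AK (N + 2) al 0 w +
      ∑ k ∈ Finset.range (N + 2), gam (0 - al 0) k (w 0)) / w 0, ?_, fun w hw => ?_⟩
    · refine MerOn.div_zero (Q := fun _ _ => False) (MerOn.of_analytic fun w hw => ?_) (by simp)
        (by simp) (Or.inl ⟨rfl, rfl⟩)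
      refine ((AnalyticAt.mul (coord_analytic 0 w) ?_).add
        (AK_analytic N al hal (by simp) w hw)).add
        (Finset.analyticAt_fun_sum _ fun k _ => gam_analytic _ k (coord_analytic 0 w))
      exact rpowC_analytic _ ((coord_analytic 0 w).add analyticAt_const).neg
    · rw [div_eq_iff (Om_zero_ne hw), mul_comm (Zw al w)]
      exact (fe_zero N al hal w fun i => by simpa using hw i).symm
  | d + 1, al, hal => by
    obtain ⟨F, hF⟩ := exists_good d (Fin.tail al) fun i => hal i.succ
    refine glue fun N => ⟨_, MerOn.div_zero (mer_rhs hal hF N) (by simp) (fun i k h => h.2)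
      (Or.inl ⟨rfl, rfl⟩), fun w hw => ?_⟩
    rw [div_eq_iff (Om_zero_ne hw), mul_comm (Zw al w),
      fe_succ N al hal w fun i => by simpa using hw i]
    congr 1
    refine Finset.sum_congr rfl fun k _ => ?_
    rw [hF.2 _ (Om_zero_tail hw k)]

/-- The functional equation of the continued function. -/
theorem good_fe {d : ℕ} {al : Fin (d + 2) → ℝ} (hal : ∀ i, al i ∈ Set.Ico (0 : ℝ) 1)
    {F : (Fin (d + 1) → ℂ) → ℂ} (hF : Good (Fin.tail al) F) {H : (Fin (d + 2) → ℂ) → ℂ}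
    (hH : Good al H) (N : ℕ) (w : Fin (d + 2) → ℂ) (hw : w ∈ Om (d + 2) N) (hw' : w ∉ pol (PP al)) :
    w 0 * H w = AK (N + 2) al (al 1) w +
      ∑ k ∈ Finset.range (N + 2), gam (al 1 - al 0) k (w 0) * F (fun i => Fin.tail w i + k) := by
  refine MerOn.unique (P := PP al) (F := fun w => w 0 * H w)
    (MerOn.mul_analytic (fun w _ => coord_analytic 0 w) (hH.1 N))
    ((mer_rhs hal hF N).mono fun i k h => h.2) (fun w hw _ => ?_) w hw hw'
  rw [hH.2 w hw, fe_succ N al hal w fun i => by simpa using hw i]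
  congr 1
  refine Finset.sum_congr rfl fun k _ => ?_
  rw [hF.2 _ (Om_zero_tail hw k)]

theorem good_fe_zero {al : Fin 1 → ℝ} (hal : ∀ i, al i ∈ Set.Ico (0 : ℝ) 1)
    {H : (Fin 1 → ℂ) → ℂ}
    (hH : Good al H) (N : ℕ) (w : Fin 1 → ℂ) (hw : w ∈ Om 1 N) (hw' : w ∉ pol (PP al)) :
    w 0 * H w = w 0 * rpowC (1 + al 0) (-(w 0 + 1)) + AK (N + 2) al 0 w +
      ∑ k ∈ Finset.range (N + 2), gam (0 - al 0) k (w 0) := by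
  refine MerOn.unique (P := PP al) (F := fun w => w 0 * H w)
    (F' := fun w => w 0 * rpowC (1 + al 0) (-(w 0 + 1)) + AK (N + 2) al 0 w +
      ∑ k ∈ Finset.range (N + 2), gam (0 - al 0) k (w 0))
    (MerOn.mul_analytic (fun w _ => coord_analytic 0 w) (hH.1 N))
    (MerOn.of_analytic fun w hw => ?_) (fun w hw _ => ?_) w hw hw'
  · refine ((AnalyticAt.mul (coord_analytic 0 w) ?_).add
        (AK_analytic N al hal (by simp) w hw)).add
        (Finset.analyticAt_fun_sum _ fun k _ => gam_analytic _ k (coord_analytic 0 w))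
    exact rpowC_analytic _ ((coord_analytic 0 w).add analyticAt_const).neg
  · rw [hH.2 w hw, fe_zero N al hal w fun i => by simpa using hw i]

/-! ### Genuine poles -/

open Filter Topology

/-- At real arguments the inner sums are nonnegative, and positive once they are nonempty. -/
theorem Hw_pos : ∀ (d : ℕ) (al : Fin d → ℝ), (∀ i, 0 ≤ al i) → ∀ (c : ℝ) (w : Fin d → ℝ) (n : ℕ),
    ∃ x : ℝ, 0 ≤ x ∧ (d < n → 0 < x) ∧ Hw d al c (fun i => (w i : ℂ)) n = x
  | 0, _, _, _, _, _ => ⟨1, zero_le_one, fun _ => one_pos, by simp [Hw]⟩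
  | d + 1, al, hal, c, w, n => by
    have h := fun m => Hw_pos d (Fin.tail al) (fun i => hal i.succ) (w 0) (Fin.tail w) m
    choose x h0 h1 h2 using h
    have hpos : ∀ m ∈ Finset.Ico 1 n, (0 : ℝ) < (m : ℝ) + al 0 := fun m hm => by
      have : (1 : ℝ) ≤ m := by exact_mod_cast (Finset.mem_Ico.1 hm).1
      linarith [hal 0]
    have hnn : ∀ m ∈ Finset.Ico 1 n, 0 ≤ ((m : ℝ) + al 0) ^ (-(w 0 - c + 1)) * x m := fun m hm =>
      mul_nonneg (Real.rpow_pos_of_pos (hpos m hm) _).le (h0 m)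
    refine ⟨∑ m ∈ Finset.Ico 1 n, ((m : ℝ) + al 0) ^ (-(w 0 - c + 1)) * x m,
      Finset.sum_nonneg hnn, fun hn => Finset.sum_pos' hnn ⟨n - 1, ?_, ?_⟩, ?_⟩
    · rw [Finset.mem_Ico]; omega
    · exact mul_pos (Real.rpow_pos_of_pos (hpos _ (by rw [Finset.mem_Ico]; omega)) _)
        (h1 _ (by omega))
    · rw [Hw, ofReal_sum]
      refine Finset.sum_congr rfl fun m hm => ?_
      rw [ofReal_mul, ← rpowC_ofReal (hpos m hm), ← h2 m]
      push_cast
      rfl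

/-- At real points of the domain of convergence the series has positive terms. -/
theorem Zw_ne_zero {d : ℕ} (al : Fin (d + 1) → ℝ) (hal : ∀ i, al i ∈ Set.Ico (0 : ℝ) 1)
    (w : Fin (d + 1) → ℝ) (hw : ∀ i, 0 < w i) : Zw al (fun i => (w i : ℂ)) ≠ 0 := by
  have h := fun m => Hw_pos d (Fin.tail al) (fun i => (hal i.succ).1) (w 0) (Fin.tail w) m
  choose x h0 h1 h2 using h
  have hpos : ∀ n : ℕ, (0 : ℝ) < ((n + 1 : ℕ) : ℝ) + al 0 := fun n => by
    have := (hal 0).1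
    positivity
  have he : ∀ n : ℕ, zt al (fun i => (w i : ℂ)) (n + 1) =
      ((((((n + 1 : ℕ) : ℝ) + al 0) ^ (-(w 0 + 1)) * x (n + 1) : ℝ)) : ℂ) := fun n => by
    rw [zt, ofReal_mul, ← rpowC_ofReal (hpos n), ← h2 (n + 1)]
    push_cast
    rfl
  have hs := zt_summable al hal (fun i => (w i : ℂ)) (by simpa using hw)
  rw [Zw]
  simp only [he] at hs ⊢
  rw [← ofReal_tsum, ofReal_ne_zero]
  refine (Summable.tsum_pos (Complex.summable_ofReal.1 hs) (fun n => ?_) d ?_).ne'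
  · exact mul_nonneg (Real.rpow_pos_of_pos (hpos n) _).le (h0 _)
  · exact mul_pos (Real.rpow_pos_of_pos (hpos d) _) (h1 _ (by omega))

/-- A nontrivial linear combination of Pochhammer polynomials is nonzero somewhere on `(0, 1)`. -/
theorem exists_ph_ne_zero (K : ℕ) (c : ℕ → ℂ) (m : ℕ) (hm : m < K) (hc : c m ≠ 0) :
    ∃ t : ℝ, 0 < t ∧ t < 1 ∧ ∑ k ∈ Finset.range K, c k * ph (t : ℂ) k ≠ 0 := by
  classical
  let Q : Polynomial ℂ := ∑ k ∈ Finset.range K, Polynomial.C (c k) *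
    ∏ j ∈ Finset.range k, (Polynomial.X + Polynomial.C (j : ℂ))
  have hQ : ∀ z, Q.eval z = ∑ k ∈ Finset.range K, c k * ph z k := fun z => by
    simp only [Q, ph, Polynomial.eval_finsetSum, Polynomial.eval_mul, Polynomial.eval_C,
      Polynomial.eval_prod, Polynomial.eval_add, Polynomial.eval_X]
  have hQ0 : Q ≠ 0 := by
    intro h0
    -- evaluate at `-n` for the least `n` with `c n ≠ 0`: only the term `k = n` survives
    have hex : ∃ n, c n ≠ 0 := ⟨m, hc⟩
    set n := Nat.find hex with hn
    have hnm : n ≤ m := Nat.find_min' hex hc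
    have h1 := hQ (-(n : ℂ))
    rw [h0, Polynomial.eval_zero, Finset.sum_eq_single n] at h1
    · refine mul_ne_zero (Nat.find_spec hex) ?_ h1.symm
      rw [ph, Finset.prod_ne_zero_iff]
      intro j hj h2
      have : (j : ℂ) = n := by linear_combination h2
      have : j = n := by exact_mod_cast this
      exact absurd (Finset.mem_range.1 hj) (by omega)
    · intro k _ hk
      rcases lt_or_gt_of_ne hk with hlt | hgt
      · have := Nat.find_min hex hlt
        push Not at this
        rw [this, zero_mul]
      · rw [ph, Finset.prod_eq_zero (Finset.mem_range.2 hgt) (by ring), mul_zero]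
    · intro h; exact absurd (Finset.mem_range.2 (lt_of_le_of_lt hnm hm)) h
  by_contra hcon
  push Not at hcon
  refine hQ0 (Polynomial.eq_zero_of_infinite_isRoot Q ?_)
  refine ((Set.Ioo_infinite (zero_lt_one (α := ℝ))).image
    (f := fun t : ℝ => (t : ℂ)) Complex.ofReal_injective.injOn).mono ?_
  rintro _ ⟨t, ht, rfl⟩
  change Q.IsRoot _
  rw [Polynomial.IsRoot, hQ]
  exact hcon t ht.1 ht.2

theorem notMem_pol {d : ℕ} {P : Fin d → ℕ → Prop} {p : Fin d → ℂ}
    (h : ∀ i, ∀ m : ℕ, p i ≠ -(m : ℂ)) : p ∉ pol P := fun ⟨i, k, _, h2⟩ => h i k h2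

theorem real_ne_int {t : ℝ} (h0 : 0 < t) (h1 : t < 1) (m : ℤ) : (t : ℂ) ≠ m := by
  intro h
  have h : t = m := by exact_mod_cast h
  rw [h] at h0 h1
  have h2 : (0 : ℤ) < m := by exact_mod_cast h0
  have h3 : m < (1 : ℤ) := by exact_mod_cast h1
  omega

/-- The hyperplane `w i = -k` is a genuine pole: at some point of it all of whose other coordinates
are not integers, the residue is nonzero. -/
def Gen {d : ℕ} (al : Fin (d + 1) → ℝ) (F : (Fin (d + 1) → ℂ) → ℂ) (i : Fin (d + 1)) (k : ℕ) :
    Prop :=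
  ∃ p : Fin (d + 1) → ℂ, p i = -(k : ℂ) ∧ (∀ j, j ≠ i → ∀ m : ℤ, p j ≠ m) ∧
    ∃ L : ℂ, L ≠ 0 ∧ Tendsto (fun w => (w i + k) * F w) (𝓝[(pol (PP al))ᶜ] p) (𝓝 L)

/-- In depth one the residue along `w 0 = 0` is `γ_0 = 1`. -/
theorem gen_zero_zero {al : Fin 1 → ℝ} (hal : ∀ i, al i ∈ Set.Ico (0 : ℝ) 1)
    {H : (Fin 1 → ℂ) → ℂ} (hH : Good al H) : Gen al H 0 0 := by
  have h0 : (0 : Fin 1 → ℂ) ∈ Om 1 1 := fun i => by simp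
  refine ⟨0, by simp, fun j hj => absurd (Fin.ext (by omega)) hj, 1, one_ne_zero, ?_⟩
  have hA : AnalyticAt ℂ (fun w : Fin 1 → ℂ => w 0 * rpowC (1 + al 0) (-(w 0 + 1)) +
      AK (1 + 2) al 0 w + ∑ k ∈ Finset.range (1 + 2), gam (0 - al 0) k (w 0)) 0 := by
    refine ((AnalyticAt.mul (coord_analytic 0 _) ?_).add
        (AK_analytic 1 al hal (by simp) _ h0)).add
        (Finset.analyticAt_fun_sum _ fun k _ => gam_analytic _ k (coord_analytic 0 _))
    exact rpowC_analytic _ ((coord_analytic 0 _).add analyticAt_const).neg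
  have ht := hA.continuousAt.tendsto.mono_left (nhdsWithin_le_nhds (s := (pol (PP al))ᶜ))
  have hv : ((0 : Fin 1 → ℂ) 0 * rpowC (1 + al 0) (-((0 : Fin 1 → ℂ) 0 + 1)) +
      AK (1 + 2) al 0 0 + ∑ k ∈ Finset.range (1 + 2), gam (0 - al 0) k ((0 : Fin 1 → ℂ) 0)) = 1 := by
    rw [AK_zero _ _ _ _ rfl, Finset.sum_range_succ']
    simp [gam_succ_zero, gam_zero]
  rw [hv] at ht
  refine ht.congr' ?_
  filter_upwards [self_mem_nhdsWithin, mem_nhdsWithin_of_mem_nhds ((Om_open 1 1).mem_nhds h0)]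
    with w h1 h2
  rw [← good_fe_zero hal hH 1 w h2 h1]; simp

/-- Along `w 0 = 0` only the term `k = 0` of the functional equation survives, so the residue is the
zeta function of lower depth, here evaluated in its domain of convergence. -/
theorem gen_zero {d : ℕ} {al : Fin (d + 2) → ℝ} (hal : ∀ i, al i ∈ Set.Ico (0 : ℝ) 1)
    {F : (Fin (d + 1) → ℂ) → ℂ} (hF : Good (Fin.tail al) F) {H : (Fin (d + 2) → ℂ) → ℂ}
    (hH : Good al H) : Gen al H 0 0 := by
  set v : Fin (d + 1) → ℂ := fun _ => ((1 / 2 : ℝ) : ℂ) with hv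
  set p : Fin (d + 2) → ℂ := Fin.cons 0 v with hp
  have hp0 : p 0 = 0 := rfl
  have hps : ∀ j, p (Fin.succ j) = ((1 / 2 : ℝ) : ℂ) := fun j => rfl
  have hpt : Fin.tail p = v := rfl
  have hpO : p ∈ Om (d + 2) 1 := by
    intro i
    refine Fin.cases ?_ (fun j => ?_) i
    · rw [hp0]; simp
    · rw [hps, ofReal_re]; norm_num
  have hvO : v ∈ Om (d + 1) 0 := fun i => by rw [hv]; simp only [ofReal_re]; norm_num
  have hFA : ∀ k : ℕ, AnalyticAt ℂ F (fun i => v i + k) := fun k => by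
    refine mer_analytic hF.1 _ (notMem_pol fun i m h => ?_)
    refine real_ne_int (t := 1 / 2) (by norm_num) (by norm_num) (-m - k) ?_
    push_cast
    simp only [hv] at h
    push_cast at h
    linear_combination h
  refine ⟨p, by rw [hp0]; simp, fun j hj => ?_, F v, ?_, ?_⟩
  · obtain ⟨j, rfl⟩ := Fin.exists_succ_eq.2 hj
    rw [hps]
    exact real_ne_int (by norm_num) (by norm_num)
  · rw [hF.2 v hvO]
    exact Zw_ne_zero _ (fun i => hal i.succ) (fun _ => 1 / 2) fun _ => by norm_num
  have hA : AnalyticAt ℂ (fun w : Fin (d + 2) → ℂ => AK (1 + 2) al (al 1) w +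
      ∑ k ∈ Finset.range (1 + 2), gam (al 1 - al 0) k (w 0) *
        F (fun i => Fin.tail w i + k)) p := by
    refine (AK_analytic 1 al hal (hal 1) _ hpO).add (Finset.analyticAt_fun_sum _ fun k _ =>
      (gam_analytic _ k (coord_analytic 0 _)).mul ?_)
    refine AnalyticAt.fun_comp (g := F) (f := fun w : Fin (d + 2) → ℂ =>
      (fun i => Fin.tail w i + (k : ℂ) : Fin (d + 1) → ℂ)) (hFA k) ?_
    exact AnalyticAt.pi fun i => (coord_analytic i.succ p).add analyticAt_const
  have ht := hA.continuousAt.tendsto.mono_left (nhdsWithin_le_nhds (s := (pol (PP al))ᶜ))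
  have hval : (AK (1 + 2) al (al 1) p +
      ∑ k ∈ Finset.range (1 + 2), gam (al 1 - al 0) k (p 0) *
        F (fun i => Fin.tail p i + k)) = F v := by
    rw [AK_zero _ _ _ _ hp0, Finset.sum_range_succ', hp0]
    simp [gam_succ_zero, gam_zero, hpt]
  rw [hval] at ht
  refine ht.congr' ?_
  filter_upwards [self_mem_nhdsWithin, mem_nhdsWithin_of_mem_nhds ((Om_open _ 1).mem_nhds hpO)]
    with w h1 h2
  rw [← good_fe hal hF hH 1 w h2 h1]; simp

/-- Every polar hyperplane other than `w 0 = 0` arises from one in lower depth, shifted by some `m` with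
`B_m(α₂ - α₁) ≠ 0`. -/
theorem exists_step {d : ℕ} {al : Fin (d + 2) → ℝ} (hal : ∀ i, al i ∈ Set.Ico (0 : ℝ) 1)
    {i : Fin (d + 1)} {j : ℕ} (h : PP al i.succ j) :
    ∃ m j', m + j' = j ∧ Bv m (al 1 - al 0) ≠ 0 ∧ PP (Fin.tail al) i j' := by
  rcases h with ⟨h, -⟩ | ⟨h, h2⟩ | h
  · simp at h
  · have : i = 0 := Fin.ext (by simpa using h)
    subst this
    exact ⟨j, 0, rfl, by simpa using h2, Or.inl ⟨rfl, rfl⟩⟩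
  · rw [Fin.val_succ] at h
    rcases (show (i : ℕ) = 1 ∨ 2 ≤ (i : ℕ) by omega) with h1 | h1
    · obtain ⟨m, j', h3, h4, h5⟩ :=
        exists_nonzero_pair j (al 0) (al 1) (al i.succ) (hal 0) (hal _)
      exact ⟨m, j', h3, h4, Or.inr (Or.inl ⟨h1, h5⟩)⟩
    · exact ⟨0, j, zero_add j, by simp [Bv_zero], Or.inr (Or.inr h1)⟩

/-- A genuine pole in lower depth, shifted by some `m` with `B_m(α₂ - α₁) ≠ 0`, is a genuine pole. The
residue in depth `d + 2` is a linear combination of the polynomials `ph (w 0) k` divided by `w 0`, with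
a nonzero coefficient at `k = m`, and `w 0` is chosen in `(0, 1)` so that it does not vanish. -/
theorem gen_succ {d : ℕ} {al : Fin (d + 2) → ℝ} (hal : ∀ i, al i ∈ Set.Ico (0 : ℝ) 1)
    {F : (Fin (d + 1) → ℂ) → ℂ} (hF : Good (Fin.tail al) F) {H : (Fin (d + 2) → ℂ) → ℂ}
    (hH : Good al H) {i : Fin (d + 1)} {m j' : ℕ} (hm : Bv m (al 1 - al 0) ≠ 0)
    (hG : Gen (Fin.tail al) F i j') : Gen al H i.succ (m + j') := by
  obtain ⟨q, hqi, hq, L, hL, hlim⟩ := hG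
  set v : Fin (d + 1) → ℂ := fun l => q l - m with hv
  -- the polar part at `v + k` of each term of the functional equation
  have hρ : ∀ k : ℕ, ∃ ρ : ℂ, (k = m → ρ ≠ 0) ∧
      Tendsto (fun u => (u i + ((m + j' : ℂ) - k)) * F u) (𝓝[(pol (PP (Fin.tail al)))ᶜ]
        (fun l => v l + (k : ℂ))) (𝓝 ρ) := by
    intro k
    have hne : ∀ l, l ≠ i → ∀ n : ℕ, v l + k ≠ -(n : ℂ) := fun l hl n h => by
      refine hq l hl (m - k - n) ?_
      simp only [hv] at h
      push_cast
      linear_combination h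
    by_cases hkm : k = m
    · subst hkm
      refine ⟨L, fun _ => hL, ?_⟩
      have h1 : (fun l => v l + (k : ℂ)) = q := by ext l; simp [hv]
      rw [h1]
      convert hlim using 3
      ring
    rcases le_or_gt k (m + j') with hk | hk
    · obtain ⟨ρ, h⟩ := mer_limit hF.1 (fun l => v l + (k : ℂ)) i (m + j' - k) (by
        simp only [hv, hqi]; rw [Nat.cast_sub hk]; push_cast; ring) hne
      refine ⟨ρ, fun h => absurd h hkm, ?_⟩
      rw [Nat.cast_sub hk] at h
      push_cast at h
      exact h
    · have hA : AnalyticAt ℂ F (fun l => v l + (k : ℂ)) := by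
        refine mer_analytic hF.1 _ (notMem_pol fun l n h => ?_)
        by_cases hl : l = i
        · subst hl
          simp only [hv, hqi] at h
          have h3 : (k : ℂ) + n = m + j' := by linear_combination h
          have h3 : k + n = m + j' := by exact_mod_cast h3
          omega
        · exact hne l hl n h
      have := ((coord_analytic i (fun l => v l + (k : ℂ))).add
        (analyticAt_const (v := ((m + j' : ℂ) - k)))).mul hA
      exact ⟨_, fun h => absurd h hkm, this.continuousAt.tendsto.mono_left nhdsWithin_le_nhds⟩
  choose ρ hρm hρ using hρ
  obtain ⟨N₀, hN₀⟩ := exists_Om v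
  set N := N₀ + m with hN
  obtain ⟨t, ht0, ht1, ht⟩ := exists_ph_ne_zero (N + 2)
    (fun k => (Bv k (al 1 - al 0) : ℂ) / (k.factorial : ℂ) * ρ k) m (by omega)
    (mul_ne_zero (div_ne_zero (ofReal_ne_zero.2 hm) (Nat.cast_ne_zero.2 m.factorial_ne_zero))
      (hρm m rfl))
  have ht' : ∑ k ∈ Finset.range (N + 2), gam (al 1 - al 0) k (t : ℂ) * ρ k ≠ 0 := by
    convert ht using 2 with k _
    rw [gam]; ring
  have htne : (t : ℂ) ≠ 0 := ofReal_ne_zero.2 ht0.ne'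
  set p : Fin (d + 2) → ℂ := Fin.cons (t : ℂ) v with hp
  have hp0 : p 0 = t := rfl
  have hps : ∀ l, p (Fin.succ l) = v l := fun l => rfl
  have hpO : p ∈ Om (d + 2) N := by
    intro l
    refine Fin.cases ?_ (fun l => ?_) l
    · rw [hp0, ofReal_re]
      have : (0 : ℝ) ≤ N := N.cast_nonneg
      linarith
    · rw [hps]; exact Om_mono (by omega) hN₀ l
  have hpi : p i.succ = -((m + j' : ℕ) : ℂ) := by
    rw [hps]; simp only [hv, hqi]; push_cast; ring
  refine ⟨p, hpi, fun l hl n => ?_, _, div_ne_zero ht' htne, ?_⟩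
  · revert hl
    refine Fin.cases ?_ (fun l => ?_) l
    · exact fun _ => real_ne_int ht0 ht1 n
    · intro hl h
      refine hq l (fun h => hl (by rw [h])) (n + m) ?_
      rw [hps] at h
      simp only [hv] at h
      push_cast
      linear_combination h
  have hterm : ∀ k : ℕ, Tendsto (fun w : Fin (d + 2) → ℂ => gam (al 1 - al 0) k (w 0) *
      ((w i.succ + (m + j' : ℕ)) * F (fun l => Fin.tail w l + k))) (𝓝[(pol (PP al))ᶜ] p)
      (𝓝 (gam (al 1 - al 0) k (t : ℂ) * ρ k)) := by
    intro k
    by_cases hk : Bv k (al 1 - al 0) = 0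
    · simp only [gam, hk, ofReal_zero, zero_mul, zero_div]
      exact tendsto_const_nhds
    refine Tendsto.mul ?_ ?_
    · exact (gam_analytic _ k (coord_analytic 0 p)).continuousAt.tendsto.mono_left
        nhdsWithin_le_nhds
    · have hmap : Tendsto (fun w : Fin (d + 2) → ℂ => fun l => Fin.tail w l + (k : ℂ))
          (𝓝[(pol (PP al))ᶜ] p) (𝓝[(pol (PP (Fin.tail al)))ᶜ] (fun l => v l + (k : ℂ))) := by
        refine tendsto_nhdsWithin_iff.2 ⟨?_, ?_⟩
        · have hc : Continuous (fun w : Fin (d + 2) → ℂ => fun l => Fin.tail w l + (k : ℂ)) :=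
            continuous_pi fun l => (continuous_apply l.succ).add continuous_const
          exact (hc.tendsto p).mono_left nhdsWithin_le_nhds
        · filter_upwards [self_mem_nhdsWithin] with w hw
          rintro ⟨l, k', h1, h2⟩
          refine hw ⟨l.succ, k' + k, PP_tail hk l k' h1, ?_⟩
          simp only [Fin.tail] at h2
          push_cast
          linear_combination h2
      refine ((hρ k).comp hmap).congr fun w => ?_
      simp only [Function.comp, Fin.tail]
      push_cast
      ring
  have hAK : Tendsto (fun w : Fin (d + 2) → ℂ => (w i.succ + (m + j' : ℕ)) *
      AK (N + 2) al (al 1) w) (𝓝[(pol (PP al))ᶜ] p) (𝓝 0) := by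
    have := (((coord_analytic i.succ p).add
      (analyticAt_const (v := ((m + j' : ℕ) : ℂ)))).mul
        (AK_analytic N al hal (hal 1) p hpO)).continuousAt.tendsto
    simp only [Pi.add_apply, Pi.mul_apply, hpi, neg_add_cancel, zero_mul] at this
    exact this.mono_left nhdsWithin_le_nhds
  have h0 : Tendsto (fun w : Fin (d + 2) → ℂ => w 0) (𝓝[(pol (PP al))ᶜ] p) (𝓝 (t : ℂ)) :=
    (coord_analytic 0 p).continuousAt.tendsto.mono_left nhdsWithin_le_nhds
  have hall := (hAK.add (tendsto_finsetSum (Finset.range (N + 2)) fun k _ => hterm k)).div h0 htne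
  rw [zero_add] at hall
  refine hall.congr' ?_
  filter_upwards [self_mem_nhdsWithin, mem_nhdsWithin_of_mem_nhds ((Om_open _ N).mem_nhds hpO)]
    with w h1 h2
  have hw0 : w 0 ≠ 0 := fun h => h1 ⟨0, 0, Or.inl ⟨rfl, rfl⟩, by simp [h]⟩
  have hfe := good_fe hal hF hH N w h2 h1
  rw [Pi.div_apply, div_eq_iff hw0]
  trans (w i.succ + (m + j' : ℕ)) * (w 0 * H w)
  · rw [hfe, mul_add, Finset.mul_sum]
    congr 1
    exact Finset.sum_congr rfl fun k _ => by ring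
  · ring

/-- All hyperplanes of the collection are genuine poles, by induction on the depth. -/
theorem gen_all : ∀ (d : ℕ) (al : Fin (d + 1) → ℝ), (∀ i, al i ∈ Set.Ico (0 : ℝ) 1) →
    ∀ H, Good al H → ∀ i k, PP al i k → Gen al H i k
  | 0, al, hal, H, hH, i, k, h => by
    have : i = 0 := Fin.ext (by omega)
    subst this
    cases k with
    | zero => exact gen_zero_zero hal hH
    | succ k => exact absurd h (not_PP_zero_succ al k)
  | d + 1, al, hal, H, hH, i, k, h => by
    obtain ⟨F, hF⟩ := exists_good d (Fin.tail al) fun i => hal i.succ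
    induction i using Fin.cases with
    | zero =>
      cases k with
      | zero => exact gen_zero hal hF hH
      | succ k => exact absurd h (not_PP_zero_succ al k)
    | succ i =>
      obtain ⟨m, j', rfl, hm, hj⟩ := exists_step hal h
      exact gen_succ hal hF hH hm (gen_all d _ (fun i => hal i.succ) F hF i j' hj)

/-! ### The original coordinates -/

/-- The coordinates `w i = c + s 0 + ⋯ + s i - (i + 1)`, in which the hyperplane `H_{i,k}` reads
`w i = -k` when `c = 0`. -/
def Psi {d : ℕ} (c : ℂ) (s : Fin d → ℂ) (i : Fin d) : ℂ :=
  c + ∑ j ∈ Finset.Iic i, s j - ((i : ℕ) + 1)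

theorem sum_Iic_zero {d : ℕ} (s : Fin (d + 1) → ℂ) : ∑ j ∈ Finset.Iic 0, s j = s 0 := by
  have : (Finset.Iic 0 : Finset (Fin (d + 1))) = {0} := by
    ext j; simp
  rw [this, Finset.sum_singleton]

theorem sum_Iic_succ {d : ℕ} (s : Fin (d + 1) → ℂ) (i : Fin d) :
    ∑ j ∈ Finset.Iic i.succ, s j = s 0 + ∑ j ∈ Finset.Iic i, Fin.tail s j := by
  have h : ∀ {n : ℕ} (f : Fin n → ℂ) (i : Fin n),
      ∑ j ∈ Finset.Iic i, f j = ∑ j, if j ≤ i then f j else 0 := fun f i => by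
    rw [← Finset.sum_filter]
    congr 1
    ext j; simp
  rw [h, h, Fin.sum_univ_succ]
  simp [Fin.tail]

theorem Psi_zero {d : ℕ} (c : ℂ) (s : Fin (d + 1) → ℂ) : Psi c s 0 = c + s 0 - 1 := by
  simp [Psi, sum_Iic_zero]

/-- Dropping the outermost argument turns the coordinates into those with the offset `c` replaced by the
first coordinate, which matches the recursion of `Hw`. -/
theorem Psi_tail {d : ℕ} (c : ℂ) (s : Fin (d + 1) → ℂ) :
    Fin.tail (Psi c s) = Psi (Psi c s 0) (Fin.tail s) := by
  ext i
  rw [Psi_zero]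
  simp only [Fin.tail, Psi, sum_Iic_succ, Fin.val_succ]
  push_cast
  ring

theorem Psi_surj : ∀ (d : ℕ) (c : ℂ) (w : Fin d → ℂ), ∃ s, Psi c s = w
  | 0, _, _ => ⟨0, by ext i; exact i.elim0⟩
  | d + 1, c, w => by
    obtain ⟨s, hs⟩ := Psi_surj d (w 0) (Fin.tail w)
    have h0 : Psi c (Fin.cons (w 0 - c + 1) s : Fin (d + 1) → ℂ) 0 = w 0 := by
      rw [Psi_zero, Fin.cons_zero]; ring
    refine ⟨Fin.cons (w 0 - c + 1) s, ?_⟩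
    have h1 := Psi_tail c (Fin.cons (w 0 - c + 1) s : Fin (d + 1) → ℂ)
    rw [h0, Fin.tail_cons, hs] at h1
    ext i
    induction i using Fin.cases with
    | zero => exact h0
    | succ i => exact congrFun h1 i

theorem Psi_analytic {d : ℕ} (c : ℂ) (s : Fin d → ℂ) : AnalyticAt ℂ (Psi c) s :=
  AnalyticAt.pi fun i => ((analyticAt_const (v := c)).add
    (Finset.analyticAt_fun_sum (Finset.Iic i) fun j _ => coord_analytic j s)).sub
      (analyticAt_const (v := ((i : ℕ) : ℂ) + 1))

theorem Psi_continuous {d : ℕ} (c : ℂ) : Continuous (Psi (d := d) c) :=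
  continuous_iff_continuousAt.2 fun s => (Psi_analytic c s).continuousAt

/-- Strictly decreasing `d`-tuples of positive integers less than `n`. -/
def DB (d n : ℕ) : Finset (Fin d → ℕ) :=
  open Classical in (Fintype.piFinset fun _ => Finset.Ico 1 n).filter StrictAnti

theorem mem_DB {d n : ℕ} {t : Fin d → ℕ} :
    t ∈ DB d n ↔ (∀ i, 1 ≤ t i ∧ t i < n) ∧ StrictAnti t := by
  simp [DB, Fintype.mem_piFinset]

theorem strictAnti_cons {d : ℕ} (m : ℕ) (t : Fin d → ℕ) :
    StrictAnti (Fin.cons m t : Fin (d + 1) → ℕ) ↔ (∀ i, t i < m) ∧ StrictAnti t := by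
  constructor
  · intro h
    exact ⟨fun i => by simpa using h (Fin.succ_pos i),
      fun i j hij => by simpa using h (Fin.succ_lt_succ_iff.2 hij)⟩
  · rintro ⟨h1, h2⟩ i j hij
    induction j using Fin.cases with
    | zero => exact absurd hij (Fin.not_lt_zero i)
    | succ j =>
      induction i using Fin.cases with
      | zero => simpa using h1 j
      | succ i => simpa using h2 (Fin.succ_lt_succ_iff.1 hij)

theorem sum_DB_succ {d n : ℕ} (f : (Fin (d + 1) → ℕ) → ℂ) :
    ∑ t ∈ DB (d + 1) n, f t = ∑ m ∈ Finset.Ico 1 n, ∑ t ∈ DB d m, f (Fin.cons m t) := by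
  rw [Finset.sum_sigma']
  refine Finset.sum_bij' (fun t _ => ⟨t 0, Fin.tail t⟩) (fun q _ => Fin.cons q.1 q.2) ?_ ?_ ?_ ?_ ?_
  · intro t ht
    obtain ⟨h1, h2⟩ := mem_DB.1 ht
    rw [Finset.mem_sigma, Finset.mem_Ico, mem_DB]
    exact ⟨h1 0, fun i => ⟨(h1 i.succ).1, h2 (Fin.succ_pos i)⟩,
      fun i j hij => h2 (Fin.succ_lt_succ_iff.2 hij)⟩
  · rintro ⟨m, t⟩ h
    obtain ⟨h1, h2⟩ := Finset.mem_sigma.1 h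
    simp only [Finset.mem_Ico] at h1
    obtain ⟨h3, h4⟩ := mem_DB.1 h2
    refine mem_DB.2 ⟨fun i => ?_, (strictAnti_cons m t).2 ⟨fun i => (h3 i).2, h4⟩⟩
    induction i using Fin.cases with
    | zero => simpa using h1
    | succ i => simpa using ⟨(h3 i).1, (h3 i).2.trans h1.2⟩
  · intro t _; simp
  · rintro ⟨m, t⟩ _; simp
  · intro t _; simp

theorem hzTerm_cons {d : ℕ} (al : Fin (d + 1) → ℝ) (s : Fin (d + 1) → ℂ) (m : ℕ) (t : Fin d → ℕ) :
    hzTerm al s (Fin.cons m t) =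
      rpowC ((m : ℝ) + al 0) (-(s 0)) * hzTerm (Fin.tail al) (Fin.tail s) t := by
  simp [hzTerm, Fin.prod_univ_succ, Fin.tail]

/-- The sum over decreasing tuples below `n` is the iterated sum `Hw`. -/
theorem sum_hzTerm : ∀ (d : ℕ) (al : Fin d → ℝ) (c : ℂ) (s : Fin d → ℂ) (n : ℕ),
    ∑ t ∈ DB d n, hzTerm al s t = Hw d al c (Psi c s) n
  | 0, al, c, s, n => by
    have : DB 0 n = {Fin.elim0} := by
      ext t
      rw [mem_DB, Finset.mem_singleton]
      exact ⟨fun _ => by ext i; exact i.elim0, fun _ => ⟨fun i => i.elim0, fun i => i.elim0⟩⟩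
    rw [this]; simp [hzTerm, Hw]
  | d + 1, al, c, s, n => by
    rw [sum_DB_succ, Hw]
    refine Finset.sum_congr rfl fun m _ => ?_
    simp only [hzTerm_cons]
    rw [← Finset.mul_sum, sum_hzTerm d _ (Psi c s 0), Psi_tail]
    congr 2
    rw [Psi_zero]; ring

theorem sum_hzTerm_cons {d : ℕ} (al : Fin (d + 1) → ℝ) (s : Fin (d + 1) → ℂ) (n : ℕ) :
    ∑ t ∈ DB d n, hzTerm al s (Fin.cons n t) = zt al (Psi 0 s) n := by
  simp only [hzTerm_cons]
  rw [← Finset.mul_sum, sum_hzTerm d _ (Psi 0 s 0), zt, Psi_tail]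
  congr 2
  rw [Psi_zero]; ring

/-- Splitting off the largest entry of a decreasing tuple. -/
def dtEquiv (d : ℕ) : DTuple (d + 1) ≃ Σ n : ℕ, ↥(DB d (n + 1)) where
  toFun t := ⟨t.1 0 - 1, Fin.tail t.1, mem_DB.2 ⟨fun i => ⟨t.2.2 i.succ, by
    have := t.2.2 0
    have h2 : t.1 i.succ < t.1 0 := t.2.1 (Fin.succ_pos i)
    simp only [Fin.tail]; omega⟩,
    fun i j hij => t.2.1 (Fin.succ_lt_succ_iff.2 hij)⟩⟩
  invFun q := ⟨Fin.cons (q.1 + 1) q.2.1, (strictAnti_cons _ _).2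
    ⟨fun i => ((mem_DB.1 q.2.2).1 i).2, (mem_DB.1 q.2.2).2⟩, fun i => by
      induction i using Fin.cases with
      | zero => simp
      | succ i => exact ((mem_DB.1 q.2.2).1 i).1⟩
  left_inv t := by
    apply Subtype.ext
    have := t.2.2 0
    simp only [Nat.sub_add_cancel this, Fin.cons_self_tail]
  right_inv q := by
    obtain ⟨n, t, ht⟩ := q
    rfl

/-- Absolute values of the terms are the terms at the real parts of the arguments. -/
theorem norm_hzTerm {d : ℕ} (al : Fin d → ℝ) (hal : ∀ i, 0 ≤ al i) (s : Fin d → ℂ) (t : Fin d → ℕ)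
    (ht : ∀ i, 0 < t i) : ((‖hzTerm al s t‖ : ℝ) : ℂ) = hzTerm al (fun i => ((s i).re : ℂ)) t := by
  rw [hzTerm, hzTerm, norm_prod, ofReal_prod]
  refine Finset.prod_congr rfl fun i _ => ?_
  have hp : (0 : ℝ) < (t i : ℝ) + al i := by
    have h1 : (0 : ℝ) < t i := by exact_mod_cast ht i
    linarith [hal i]
  rw [norm_rpowC hp, ← rpowC_ofReal hp]
  simp

theorem mem_Ur_iff {r : ℕ} {s : Fin r → ℂ} : s ∈ Ur r 0 ↔ Psi 0 s ∈ Om r 0 := by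
  refine forall_congr' fun i => ?_
  simp only [Psi, Int.cast_zero, sub_zero, Nat.cast_zero, neg_zero, zero_add, sub_re, add_re,
    natCast_re, one_re, sub_pos]

/-- In the domain of convergence, the sum over decreasing tuples is the iterated sum. -/
theorem multipleHurwitz_eq {d : ℕ} (al : Fin (d + 1) → ℝ) (hal : ∀ i, al i ∈ Set.Ico (0 : ℝ) 1)
    (s : Fin (d + 1) → ℂ) (hs : s ∈ Ur (d + 1) 0) : multipleHurwitz al s = Zw al (Psi 0 s) := by
  set g : (Σ n : ℕ, ↥(DB d (n + 1))) → ℂ := fun q => hzTerm al s ((dtEquiv d).symm q).1 with hg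
  have hfin : ∀ n, Summable fun c => g ⟨n, c⟩ := fun n => Summable.of_finite
  have hsum : Summable g := by
    refine Summable.of_norm ?_
    rw [summable_sigma_of_nonneg fun _ => norm_nonneg _]
    refine ⟨fun n => Summable.of_finite, ?_⟩
    set s' : Fin (d + 1) → ℂ := fun i => ((s i).re : ℂ) with hs'
    have h1 : Summable (fun n : ℕ => zt al (Psi 0 s') (n + 1)) := by
      refine zt_summable al hal _ fun i => ?_
      have := mem_Ur_iff.1 hs i
      simp only [Psi, Nat.cast_zero, neg_zero, zero_add, sub_re, re_sum] at this ⊢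
      simpa [hs'] using this
    refine Complex.summable_ofReal.1 (h1.congr fun n => ?_)
    rw [tsum_fintype, ofReal_sum, ← sum_hzTerm_cons, ← Finset.sum_coe_sort]
    refine Finset.sum_congr rfl fun t _ => ?_
    exact (norm_hzTerm al (fun i => (hal i).1) s _ ((dtEquiv d).symm ⟨n, t⟩).2.2).symm
  rw [multipleHurwitz, ← (dtEquiv d).symm.tsum_eq]
  change ∑' q, g q = _
  rw [hsum.tsum_sigma' hfin, Zw]
  refine tsum_congr fun n => ?_
  rw [tsum_fintype, ← sum_hzTerm_cons,
    ← Finset.sum_coe_sort (DB d (n + 1)) fun t => hzTerm al s (Fin.cons (n + 1) t)]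
  rfl

theorem mem_Hplane_iff {r : ℕ} {s : Fin r → ℂ} {i : Fin r} {k : ℕ} :
    s ∈ Hplane r i k ↔ Psi 0 s i = -(k : ℂ) := by
  rw [Hplane, Set.mem_ofPred_eq, Psi]
  constructor <;> intro h <;> linear_combination h

theorem mem_polarSet_iff {r : ℕ} {P : Fin r → ℕ → Prop} {s : Fin r → ℂ} :
    s ∈ polarSet P ↔ Psi 0 s ∈ pol P := by
  simp only [polarSet, pol, Set.mem_ofPred_eq, mem_Hplane_iff]

theorem S17_eq {r : ℕ} (al : Fin (r + 2) → ℝ) : S17 r (al 1 - al 0) = PP al := by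
  funext i k
  rw [S17, PP]
  by_cases h : (i : ℕ) = 1
  · have : i = 1 := Fin.ext (by simpa using h)
    subst this; rfl
  · simp [h]

theorem linForm_eq {r : ℕ} (s : Fin r → ℂ) (i : Fin r) (k : ℕ) :
    (∑ j ∈ Finset.Iic i, s j) - ((i : ℕ) + 1 : ℂ) + (k : ℂ) = Psi 0 s i + k := by
  rw [Psi, zero_add]

/-- **Theorem 3.** For `r ≥ 2`, the multiple Hurwitz zeta function continues
meromorphically to `ℂ^r`, all its poles are simple, and its polar hyperplanes are
exactly the members of `S`. -/
theorem stmt_17 (r : ℕ) (al : Fin (r + 2) → ℝ) (hal : ∀ i, al i ∈ Set.Ico (0 : ℝ) 1) :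
    ∃ F : (Fin (r + 2) → ℂ) → ℂ,
      AnalyticOnNhd ℂ F (polarSet (S17 r (al 1 - al 0)))ᶜ ∧
      (∀ s ∈ Ur (r + 2) 0, F s = multipleHurwitz al s) ∧
      SimplePolesAlong (S17 r (al 1 - al 0)) F ∧
      ∀ (i : Fin (r + 2)) (k : ℕ), S17 r (al 1 - al 0) i k →
        GenuinePole (S17 r (al 1 - al 0)) F i k := by
  rw [S17_eq]
  obtain ⟨F, hF⟩ := exists_good (r + 1) al hal
  refine ⟨fun s => F (Psi 0 s), fun s hs => ?_, fun s hs => ?_, fun p T hT => ?_,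
    fun i k hik => ?_⟩
  · exact AnalyticAt.fun_comp (g := F) (f := Psi 0)
      (mer_analytic hF.1 _ fun h => hs (mem_polarSet_iff.2 h)) (Psi_analytic 0 s)
  · rw [multipleHurwitz_eq al hal s hs, ← hF.2 _ (mem_Ur_iff.1 hs)]
  · obtain ⟨V, G, hV, hpV, hG, h⟩ := mer_local hF.1 (Psi 0 p) T fun i k => by
      rw [hT, mem_Hplane_iff]
    refine ⟨Psi 0 ⁻¹' V, fun s => G (Psi 0 s), hV.preimage (Psi_continuous 0), hpV,
      fun s hs => AnalyticAt.fun_comp (g := G) (f := Psi 0) (hG _ hs) (Psi_analytic 0 s),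
      fun s hs hs' => ?_⟩
    simp only [linForm_eq]
    exact h _ hs fun hh => hs' (mem_polarSet_iff.2 hh)
  · obtain ⟨p', hp, hp', L, hL, hlim⟩ := gen_all (r + 1) al hal F hF i k hik
    obtain ⟨p, rfl⟩ := Psi_surj _ 0 p'
    refine ⟨p, mem_Hplane_iff.2 hp, fun i' k' _ hne hmem => ?_, L, hL, ?_⟩
    · rw [mem_Hplane_iff] at hmem
      by_cases hi : i' = i
      · subst hi
        rw [hp, neg_inj] at hmem
        exact hne ⟨rfl, by exact_mod_cast hmem.symm⟩
      · refine hp' i' hi (-k') ?_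
        rw [hmem]; push_cast; rfl
    · simp only [linForm_eq]
      refine hlim.comp (tendsto_nhdsWithin_iff.2 ⟨?_, ?_⟩)
      · exact ((Psi_continuous 0).tendsto p).mono_left nhdsWithin_le_nhds
      · filter_upwards [self_mem_nhdsWithin] with s hs
        exact fun h => hs (mem_polarSet_iff.2 h)
end
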